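/- Let {ε_i} be i.i.d. Rademacher random variables and let S ⊂ X be as above with t = μ(S) ≤ 1/2, f = 1_S − 1_{−S}. Then for any v ∈ ℝ^n and p ≥ 2, I_p(v,f) ≥ A_p (2t)^{1/2} (Σ_{i=1}^n v_i^2)^{1/2}, and for 1 ≤ p ≤ 2, I_p(v,f) ≥ A_p (2t)^{1/p} (Σ_{i=1}^n v_i^2)^{1/2}, where A_p = min{1, 2^{1/2−1/p}, 2^{1/2}(Γ((p+1)/2)/√π)^{1/p}} is the optimal lower Khintchine constant. -/

import Mathlib

open MeasureTheory

section part1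
open Real Set

lemma hk_mono0 {f f' : ℝ → ℝ} {b : ℝ} (h : ∀ x, 0 ≤ x → x < b → HasDerivAt f (f' x) x)
    (h' : ∀ x, 0 < x → x < b → 0 ≤ f' x) (h0 : 0 ≤ f 0) : ∀ x, 0 ≤ x → x < b → 0 ≤ f x := by
  intro x hx hxb
  have : MonotoneOn f (Icc 0 x) := by
    apply monotoneOn_of_deriv_nonneg (convex_Icc 0 x)
    · intro y hy
      exact (h y hy.1 (lt_of_le_of_lt hy.2 hxb)).continuousAt.continuousWithinAt
    · intro y hy
      rw [interior_Icc] at hy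
      exact (h y hy.1.le (hy.2.trans hxb)).differentiableAt.differentiableWithinAt
    · intro y hy
      rw [interior_Icc] at hy
      rw [(h y hy.1.le (hy.2.trans hxb)).deriv]
      exact h' y hy.1 (hy.2.trans hxb)
  exact h0.trans (this ⟨le_rfl, hx⟩ ⟨hx, le_rfl⟩ hx)

lemma hk_cos_upper (x : ℝ) (hx : 0 ≤ x) : cos x ≤ 1 - x ^ 2 / 2 + x ^ 4 / 24 := by
  have := hk_mono0 (f := fun x => 1 - x ^ 2 / 2 + x ^ 4 / 24 - cos x)
    (f' := fun x => sin x - (x - x ^ 3 / 6)) (b := x + 1) (fun y _ _ => by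
      have := (((hasDerivAt_pow 2 y).div_const 2).const_sub 1).add ((hasDerivAt_pow 4 y).div_const 24)
      exact (this.sub (hasDerivAt_cos y)).congr_deriv (by norm_num; ring)) (fun y hy _ => by linarith [sin_ge_sub_cube hy.le]) (by norm_num) x hx (by linarith)
  linarith

lemma hk_sin_upper (x : ℝ) (hx : 0 ≤ x) : sin x ≤ x - x ^ 3 / 6 + x ^ 5 / 120 := by
  have := hk_mono0 (f := fun x => x - x ^ 3 / 6 + x ^ 5 / 120 - sin x)
    (f' := fun x => 1 - x ^ 2 / 2 + x ^ 4 / 24 - cos x) (b := x + 1) (fun y _ _ => by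
      have := ((hasDerivAt_id y).sub ((hasDerivAt_pow 3 y).div_const 6)).add ((hasDerivAt_pow 5 y).div_const 120)
      exact (this.sub (hasDerivAt_sin y)).congr_deriv (by norm_num; ring)) (fun y hy _ => by linarith [hk_cos_upper y hy.le]) (by norm_num) x hx (by linarith)
  linarith

lemma hk_cos_lower (x : ℝ) (hx : 0 ≤ x) :
    1 - x ^ 2 / 2 + x ^ 4 / 24 - x ^ 6 / 720 ≤ cos x := by
  have := hk_mono0 (f := fun x => cos x - (1 - x ^ 2 / 2 + x ^ 4 / 24 - x ^ 6 / 720))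
    (f' := fun x => (x - x ^ 3 / 6 + x ^ 5 / 120) - sin x) (b := x + 1) (fun y _ _ => by
      have := ((((hasDerivAt_pow 2 y).div_const 2).const_sub 1).add ((hasDerivAt_pow 4 y).div_const 24)).sub
        ((hasDerivAt_pow 6 y).div_const 720)
      exact ((hasDerivAt_cos y).sub this).congr_deriv (by norm_num; ring)) (fun y hy _ => by linarith [hk_sin_upper y hy.le]) (by norm_num) x hx (by linarith)
  linarith

/-- Truncated Taylor series of the tangent. -/
noncomputable def hkP (x : ℝ) : ℝ := x + x ^ 3 / 3 + 2 * x ^ 5 / 15 + 17 * x ^ 7 / 315 + 62 * x ^ 9 / 2835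
  + 1382 * x ^ 11 / 155925 + 21844 * x ^ 13 / 6081075

noncomputable def hkP' (x : ℝ) : ℝ := 1 + x ^ 2 + 2 * x ^ 4 / 3 + 17 * x ^ 6 / 45 + 62 * x ^ 8 / 315
  + 1382 * x ^ 10 / 14175 + 21844 * x ^ 12 / 467775

lemma hkP_deriv (x : ℝ) : HasDerivAt hkP (hkP' x) x := by
  have h (n : ℕ) (a b : ℝ) := ((hasDerivAt_pow n x).const_mul a).div_const b
  have := ((((((hasDerivAt_id x).add ((hasDerivAt_pow 3 x).div_const 3)).add (h 5 2 15)).add (h 7 17 315)).add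
    (h 9 62 2835)).add (h 11 1382 155925)).add (h 13 21844 6081075)
  exact this.congr_deriv (by unfold hkP'; norm_num; ring)

lemma hkP_ode (x : ℝ) (hx : 0 ≤ x) : hkP' x ≤ 1 + hkP x ^ 2 := by
  rw [← sub_nonneg]
  unfold hkP hkP'
  ring_nf
  positivity

lemma hk_tan_lower (x : ℝ) (hx : 0 ≤ x) (hx2 : x < π / 2) : hkP x ≤ tan x := by
  have := hk_mono0 (f := fun x => x - arctan (hkP x))
    (f' := fun x => 1 - 1 / (1 + hkP x ^ 2) * hkP' x) (b := π / 2) (fun y _ _ =>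
      (hasDerivAt_id y).sub ((hasDerivAt_arctan' _).comp y (hkP_deriv y)) |>.congr_deriv (by simp)) 
      (fun y hy _ => by
        have := hkP_ode y hy.le
        have h2 : 0 < 1 + hkP y ^ 2 := by positivity
        rw [sub_nonneg, one_div, inv_mul_le_iff₀ h2]; linarith) (by simp [hkP]) x hx hx2
  have h2 : arctan (hkP x) ≤ x := by linarith
  calc hkP x = tan (arctan (hkP x)) := (tan_arctan _).symm
    _ ≤ tan x := by
      rcases h2.eq_or_lt with h | h
      · rw [h]
      · exact (tan_lt_tan_of_lt_of_lt_pi_div_two (neg_pi_div_two_lt_arctan _) hx2 h).le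

noncomputable def hkc (x : ℝ) : ℝ := - log (cos x)

lemma hkc_deriv (x : ℝ) (hx : 0 ≤ x) (hx2 : x < π / 2) : HasDerivAt hkc (tan x) x := by
  have hc : 0 < cos x := cos_pos_of_mem_Ioo ⟨by linarith [pi_pos], hx2⟩
  have := ((hasDerivAt_cos x).log hc.ne').neg
  exact this.congr_deriv (by rw [tan_eq_sin_div_cos]; ring)

/-- lower bound for `-2 log cos x / x^2`, in terms of `y = x^2` -/
noncomputable def hkK (y : ℝ) : ℝ := 1 + y / 6 + 2 * y ^ 2 / 45 + 17 * y ^ 3 / 1260 + 62 * y ^ 4 / 14175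
  + 1382 * y ^ 5 / 935550 + 21844 * y ^ 6 / 42567525

lemma hkc_lower (x : ℝ) (hx : 0 ≤ x) (hx2 : x < π / 2) : x ^ 2 / 2 * hkK (x ^ 2) ≤ hkc x := by
  have := hk_mono0 (f := fun x => hkc x - x ^ 2 / 2 * hkK (x ^ 2))
    (f' := fun x => tan x - hkP x) (b := π / 2) (fun y h1 h2 => by
      refine (hkc_deriv y h1 h2).sub ?_
      have h (n : ℕ) (b : ℝ) := (hasDerivAt_pow n y).mul_const b
      have := ((((((h 2 (1/2)).add (h 4 (1/12))).add (h 6 (1/45))).add (h 8 (17/2520))).add (h 10 (31/14175))).add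
        (h 12 (691/935550))).add (h 14 (10922/42567525))
      convert this using 1
      · ext z; simp [hkK]; ring
      · simp [hkP]; ring) (fun y h1 h2 => by linarith [hk_tan_lower y h1.le h2]) (by simp [hkc]) x hx hx2
  linarith

lemma hkK_poly (y : ℝ) (hy : 0 < y) (hy2 : y ≤ 441 / 400) :
    1 - y / 6 + y ^ 2 / 120 ≤ hkK y * (1.19 * hkK y - 0.19) * (1 - y / 2 + y ^ 2 / 24 - y ^ 3 / 720) := by
  obtain ⟨z, hz, rfl⟩ : ∃ z : ℝ, 0 ≤ z ∧ y = 441 / 400 / (1 + z) :=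
    ⟨441 / 400 / y - 1, by rw [sub_nonneg, le_div_iff₀ hy]; linarith, by field_simp; ring⟩
  rw [← sub_nonneg]
  unfold hkK
  have h1 : (0:ℝ) < 1 + z := by linarith
  have key : ∀ a : ℝ, 0 ≤ (1 + z) ^ 15 * a → 0 ≤ a := fun a h => nonneg_of_mul_nonneg_right h (by positivity)
  apply key
  field_simp
  ring_nf
  positivity


end part1

section part2
open Real Set

lemma hk_tan_le (x : ℝ) (hx : 0 < x) (hx2 : x ≤ 1.05) :
    x * tan x * x ^ 2 ≤ hkc x * (2.38 * (2 * hkc x) - 0.38 * x ^ 2) := by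
  have hpi := pi_gt_d2
  have hxp : x < π / 2 := by linarith
  have hc : 0 < cos x := cos_pos_of_mem_Ioo ⟨by linarith, hxp⟩
  have hy : 0 < x ^ 2 := by positivity
  have hy2 : x ^ 2 ≤ 441 / 400 := by nlinarith
  have h1 := hkK_poly (x ^ 2) hy hy2
  have h2 := hkc_lower x hx.le hxp
  have h3 := hk_sin_upper x hx.le
  have h4 := hk_cos_lower x hx.le
  obtain ⟨K, hK⟩ : ∃ K, hkc x = x ^ 2 / 2 * K := ⟨hkc x / (x ^ 2 / 2), by field_simp⟩
  have hKK : hkK (x ^ 2) ≤ K := by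
    rw [hK] at h2; exact le_of_mul_le_mul_left h2 (by positivity)
  have hK1 : 1 ≤ hkK (x ^ 2) := by unfold hkK; ring_nf; linarith [show 0 ≤ x^2*(1/6) + x^4*(2/45) + x^6*(17/1260) + x^8*(62/14175) + x^10*(691/467775) + x^12*(21844/42567525) by positivity]
  have hq : hkK (x ^ 2) * (1.19 * hkK (x ^ 2) - 0.19) ≤ K * (1.19 * K - 0.19) := by
    apply mul_le_mul hKK (by linarith) (by linarith) (by linarith)
  have h5 : sin x ≤ x * (K * (1.19 * K - 0.19)) * cos x := by
    have e1 : 0 ≤ hkK (x ^ 2) * (1.19 * hkK (x ^ 2) - 0.19) := by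
      apply mul_nonneg <;> linarith
    calc sin x ≤ x * (1 - x ^ 2 / 6 + (x ^ 2) ^ 2 / 120) := by linarith
      _ ≤ x * ((hkK (x ^ 2) * (1.19 * hkK (x ^ 2) - 0.19)) * (1 - x ^ 2 / 2 + (x ^ 2) ^ 2 / 24 - (x ^ 2) ^ 3 / 720)) := by
        gcongr
      _ ≤ x * ((hkK (x ^ 2) * (1.19 * hkK (x ^ 2) - 0.19)) * cos x) := by
        gcongr; linarith
      _ ≤ x * ((K * (1.19 * K - 0.19)) * cos x) := by
        gcongr
      _ = _ := by ring
  have h6 : tan x ≤ x * (K * (1.19 * K - 0.19)) := by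
    rw [tan_eq_sin_div_cos, div_le_iff₀ hc]; exact h5
  rw [hK]
  have : x * tan x * x ^ 2 ≤ x * (x * (K * (1.19 * K - 0.19))) * x ^ 2 := by gcongr
  refine this.trans (le_of_eq ?_)
  ring

lemma hk_tan_ge (x : ℝ) (hx : 0 ≤ x) (hx2 : x < π / 2) : 2 * hkc x ≤ x * tan x := by
  have := hk_mono0 (f := fun x => x * tan x - 2 * hkc x)
    (f' := fun x => 1 * tan x + x * (1 / cos x ^ 2) - 2 * tan x) (b := π / 2) (fun y h1 h2 => by
      have hc : 0 < cos y := cos_pos_of_mem_Ioo ⟨by linarith [pi_pos], h2⟩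
      exact ((hasDerivAt_id y).mul (hasDerivAt_tan hc.ne')).sub ((hkc_deriv y h1 h2).const_mul 2))
      (fun y h1 h2 => by
      have hc : 0 < cos y := cos_pos_of_mem_Ioo ⟨by linarith [pi_pos], h2⟩
      have hs := sin_le h1.le
      have hs0 : 0 ≤ sin y := sin_nonneg_of_nonneg_of_le_pi h1.le (by linarith)
      rw [tan_eq_sin_div_cos]
      have : 1 * (sin y / cos y) + y * (1 / cos y ^ 2) - 2 * (sin y / cos y) = (y - sin y * cos y) / cos y ^ 2 := by
        field_simp; ring
      rw [this]
      have := cos_le_one y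
      apply div_nonneg _ (by positivity)
      nlinarith) (by simp [hkc]) x hx hx2
  linarith

lemma hkc_pos (x : ℝ) (hx : 0 < x) (hx2 : x < π / 2) : x ^ 2 / 2 ≤ hkc x := by
  refine le_trans ?_ (hkc_lower x hx.le hx2)
  have hK1 : 1 ≤ hkK (x ^ 2) := by unfold hkK; ring_nf; linarith [show 0 ≤ x^2*(1/6) + x^4*(2/45) + x^6*(17/1260) + x^8*(62/14175) + x^10*(691/467775) + x^12*(21844/42567525) by positivity]
  nlinarith [sq_nonneg x]

lemma hkc_num : 2 * hkc 1.05 ≤ 1.27 * 1.05 ^ 2 := by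
  have h4 := hk_cos_lower 1.05 (by norm_num)
  have h5 : 0.9950 / 2 ≤ cos 1.05 := by norm_num at h4 ⊢; linarith
  have h6 := log_le_log (by norm_num) h5
  rw [log_div (by norm_num) (by norm_num)] at h6
  have h7 := one_sub_inv_le_log_of_pos (show (0:ℝ) < 0.9950 by norm_num)
  have h8 := log_two_lt_d9
  unfold hkc
  norm_num at *
  linarith

lemma hkc_ratio (x : ℝ) (hx : 0 < x) (hx2 : x ≤ 1.05) : 2 * hkc x ≤ 1.27 * x ^ 2 := by
  have hpi := pi_gt_d2
  have hmono : MonotoneOn (fun x => hkc x / x ^ 2) (Icc x 1.05) := by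
    have hd : ∀ y ∈ Icc x 1.05, HasDerivAt (fun x => hkc x / x ^ 2)
        ((tan y * y ^ 2 - hkc y * ((2:ℕ) * y ^ (2-1))) / (y ^ 2) ^ 2) y := fun y hy =>
      (hkc_deriv y (hx.le.trans hy.1) (by linarith [hy.2])).div (hasDerivAt_pow 2 y) (by
        have := lt_of_lt_of_le hx hy.1
        positivity)
    apply monotoneOn_of_deriv_nonneg (convex_Icc _ _)
    · intro y hy
      exact (hd y hy).continuousAt.continuousWithinAt
    · intro y hy
      exact (hd y (interior_subset hy)).differentiableAt.differentiableWithinAt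
    · intro y hy
      have hy := interior_subset hy
      rw [(hd y hy).deriv]
      have hy0 := lt_of_lt_of_le hx hy.1
      have := hk_tan_ge y hy0.le (by linarith [hy.2])
      apply div_nonneg _ (by positivity)
      norm_num
      nlinarith
  have := hmono ⟨le_rfl, hx2⟩ ⟨hx2, le_rfl⟩ hx2
  have h2 := hkc_num
  simp only at this
  rw [div_le_div_iff₀ (by positivity) (by norm_num)] at this
  norm_num at *
  nlinarith

lemma hk_log_le (K : ℝ) (hK : 1 ≤ K) : K * log K ≤ (K ^ 2 - 1) / 2 := by
  have := hk_mono0 (f := fun t => ((1 + t) ^ 2 - 1) / 2 - (1 + t) * log (1 + t))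
    (f' := fun t => (1 + t) - (log (1 + t) + 1)) (b := K) (fun y h1 h2 => by
      have e : HasDerivAt (fun t : ℝ => 1 + t) 1 y := (hasDerivAt_id y).const_add 1
      have := (((e.pow 2).sub_const 1).div_const 2).sub (e.mul (e.log (by linarith)))
      refine this.congr_deriv ?_
      have : 1 + y ≠ 0 := by linarith
      norm_num; field_simp) (fun y h1 h2 => by
        have := log_le_sub_one_of_pos (show 0 < 1 + y by linarith)
        linarith) (by norm_num) (K - 1) (by linarith) (by linarith)
  norm_num at this
  linarith

lemma hk_rpow (K q : ℝ) (hK : 1 ≤ K) (hK2 : K ≤ 1.27) (hq : 3 / 4 ≤ q) (hq1 : q ≤ 1) :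
    q * (2.38 * (K - 1)) ≤ (2 * q + 1) * (K ^ q - 1) := by
  have hK0 : 0 < K := by linarith
  have h1 : K ^ q = K * exp (-(1 - q) * log K) := by
    rw [rpow_def_of_pos hK0]
    nth_rewrite 2 [← exp_log hK0]
    rw [← exp_add]; ring_nf
  have h2 := add_one_le_exp (-(1 - q) * log K)
  have h3 := hk_log_le K hK
  have h4 : K - (1 - q) * ((K ^ 2 - 1) / 2) ≤ K ^ q := by
    rw [h1]
    calc _ ≤ K - (1 - q) * (K * log K) := by gcongr
      _ = K * (-(1 - q) * log K + 1) := by ring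
      _ ≤ _ := by gcongr
  have h5 : q * (2.38 * (K - 1)) ≤ (2 * q + 1) * (K - (1 - q) * ((K ^ 2 - 1) / 2) - 1) := by
    have : (2 * q + 1) * (K - (1 - q) * ((K ^ 2 - 1) / 2) - 1) - q * (2.38 * (K - 1))
       = (K - 1) * ((2 * q + 1) * (1 - (1 - q) * (K + 1) / 2) - 2.38 * q) := by ring
    rw [← sub_nonneg, this]
    apply mul_nonneg (by linarith)
    have : (2 * q + 1) * (1 - (1 - q) * (1.27 + 1) / 2) ≤ (2 * q + 1) * (1 - (1 - q) * (K + 1) / 2) := by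
      gcongr
    nlinarith
  have : (2 * q + 1) * (K - (1 - q) * ((K ^ 2 - 1) / 2) - 1) ≤ (2 * q + 1) * (K ^ q - 1) := by
    gcongr
  linarith

/-- `D(θ)/θ` is antitone -/
lemma hk_D_anti (p : ℝ) (hp : 3 / 2 ≤ p) (hp2 : p ≤ 2) :
    AntitoneOn (fun x : ℝ => (x ^ (-p) - (2 * hkc x) ^ (-(p / 2))) / x) (Ioc 0 1.05) := by
  have hpi := pi_gt_d2
  have hd : ∀ x ∈ Ioc (0:ℝ) 1.05, HasDerivAt (fun x : ℝ => (x ^ (-p) - (2 * hkc x) ^ (-(p / 2))) / x)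
      (((-p * x ^ (-p - 1) - 2 * tan x * (-(p / 2)) * (2 * hkc x) ^ (-(p / 2) - 1)) * x
        - (x ^ (-p) - (2 * hkc x) ^ (-(p / 2))) * 1) / x ^ 2) x := by
    intro x hx
    have hc := hkc_pos x hx.1 (by linarith [hx.2])
    have hx0 := hx.1
    have : 0 < 2 * hkc x := by nlinarith
    exact ((hasDerivAt_rpow_const (Or.inl hx0.ne')).sub
      (((hkc_deriv x hx0.le (by linarith [hx.2])).const_mul 2).rpow_const (Or.inl this.ne'))).div (hasDerivAt_id x) hx0.ne'
  apply antitoneOn_of_deriv_nonpos (convex_Ioc _ _)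
  · intro y hy
    exact (hd y hy).continuousAt.continuousWithinAt
  · intro y hy
    exact (hd y (interior_subset hy)).differentiableAt.differentiableWithinAt
  · intro x hx
    have hx := interior_subset hx
    rw [(hd x hx).deriv]
    have hx0 := hx.1
    have hxp : x < π / 2 := by linarith [hx.2]
    obtain ⟨K, hK⟩ : ∃ K, 2 * hkc x = x ^ 2 * K := ⟨2 * hkc x / (x ^ 2), by field_simp⟩
    have hx2 : 0 < x ^ 2 := by positivity
    have hK1 : 1 ≤ K := by
      have := hkc_pos x hx0 hxp
      by_contra h; push Not at h
      nlinarith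
    have hK2 : K ≤ 1.27 := by
      have := hkc_ratio x hx0 hx.2
      by_contra h; push Not at h
      nlinarith
    have hK0 : 0 < K := by linarith
    have h1 := hk_rpow K (p / 2) hK1 hK2 (by linarith) (by linarith)
    have h2 : x * tan x ≤ K / 2 * (2.38 * K - 0.38) * x ^ 2 := by
      have := hk_tan_le x hx0 hx.2
      rw [hK, show hkc x = x ^ 2 * K / 2 by linarith] at this
      have e : x ^ 2 * K / 2 * (2.38 * (x ^ 2 * K) - 0.38 * x ^ 2) = (K / 2 * (2.38 * K - 0.38) * x ^ 2) * x ^ 2 := by ring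
      rw [e] at this
      exact le_of_mul_le_mul_right this hx2
    rw [hK]
    apply div_nonpos_of_nonpos_of_nonneg _ (by positivity)
    have e1 : (x ^ 2 * K) ^ (-(p / 2)) = x ^ (-p) * K ^ (-(p / 2)) := by
      rw [mul_rpow (by positivity) (by positivity), ← rpow_natCast, ← rpow_mul hx0.le]
      congr 2; push_cast; ring
    have e2 : (x ^ 2 * K) ^ (-(p / 2) - 1) = x ^ (-p) * K ^ (-(p / 2)) / (x ^ 2 * K) := by
      rw [rpow_sub_one (by positivity), e1]
    rw [e1, e2, rpow_sub_one hx0.ne']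
    have e3 : K ^ (-(p / 2)) = 1 / K ^ (p / 2) := by rw [rpow_neg hK0.le, one_div]
    rw [e3]
    have hKq : 0 < K ^ (p / 2) := by positivity
    have hxq : 0 < x ^ (-p) := by positivity
    have : (-p * (x ^ (-p) / x) - 2 * tan x * (-(p / 2)) * (x ^ (-p) * (1 / K ^ (p / 2)) / (x ^ 2 * K))) * x
        - (x ^ (-p) - x ^ (-p) * (1 / K ^ (p / 2))) * 1 
        = x ^ (-p) / K ^ (p / 2) * (-(p + 1) * K ^ (p / 2) + p * ((x * tan x) / (x ^ 2 * K)) + 1) := by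
      field_simp; ring
    rw [this]
    apply mul_nonpos_of_nonneg_of_nonpos (by positivity)
    have h3 : (x * tan x) / (x ^ 2 * K) ≤ (2.38 * K - 0.38) / 2 := by
      rw [div_le_iff₀ (by positivity)]; linarith
    have h4 : p * ((x * tan x) / (x ^ 2 * K)) ≤ p * ((2.38 * K - 0.38) / 2) := by gcongr
    nlinarith

end part2

section part3
open Real Set

lemma hk_poly2 (x : ℝ) (h1 : 1 / 4 ≤ x) (h2 : x ≤ 0.5209) :
    4 * (0.5 - 0.30685 * x + 0.175 * x ^ 3) * (3.1416 + 0.03226 * (2.4672 - x ^ 2) ^ 2) ≤ (2.4672 - x ^ 2) ^ 2 := by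
  obtain ⟨z, hz, rfl⟩ : ∃ z : ℝ, 0 ≤ z ∧ x = (0.25 + 0.521 * z) / (1 + z) :=
    ⟨(x - 0.25) / (0.521 - x), div_nonneg (by linarith) (by linarith), by
      have : 0.521 - x ≠ 0 := by linarith
      have h3 : 1 + (x - 0.25) / (0.521 - x) = 0.271 / (0.521 - x) := by field_simp; ring
      rw [h3]; field_simp; ring⟩
  rw [← sub_nonneg]
  have h1 : (0:ℝ) < 1 + z := by linarith
  have key : ∀ a : ℝ, 0 ≤ (1 + z) ^ 7 * a → 0 ≤ a := fun a h => nonneg_of_mul_nonneg_right h (by positivity)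
  apply key
  field_simp
  ring_nf
  positivity

lemma hk_poly1 (x : ℝ) (h1 : 0 < x) (h2 : x ≤ 1 / 4) :
    4 * (0.25 + 0.3863 * x + 0.175 * x ^ 3) * (3.1416 + 0.03226 * (2.4672 - x ^ 2) ^ 2) ≤ (2.4672 - x ^ 2) ^ 2 := by
  have e1 : 5.78 ≤ (2.4672 - x ^ 2) ^ 2 := by
    have : x ^ 2 ≤ 1 / 16 := by nlinarith
    nlinarith
  have e2 : (0.25 + 0.3863 * x + 0.175 * x ^ 3) ≤ 0.35 := by
    have : x ^ 3 ≤ (1 / 4) ^ 3 := by gcongr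
    norm_num at this ⊢; linarith
  have : 4 * (0.25 + 0.3863 * x + 0.175 * x ^ 3) * (3.1416 + 0.03226 * (2.4672 - x ^ 2) ^ 2)
    ≤ 4 * 0.35 * (3.1416 + 0.03226 * (2.4672 - x ^ 2) ^ 2) := by gcongr
  linarith

lemma hk_philog (x a : ℝ) (hx : 0 < x) (ha : 0 < a) : x * (-log x) ≤ x * (-log a) + a - x := by
  have h1 := log_le_sub_one_of_pos (show 0 < a / x by positivity)
  rw [log_div ha.ne' hx.ne'] at h1
  have : x * (log a - log x) ≤ x * (a / x - 1) := by gcongr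
  have e : x * (a / x - 1) = a - x := by field_simp
  linarith

lemma hk_U (θ : ℝ) (h1 : 1.05 ≤ θ) (h2 : θ < π / 2) :
    1 / θ ^ 2 - 1 / (π - θ) ^ 2 + (1 - 2 * θ / π) / π ^ 2 ≤ 1 / (2 * hkc θ) := by
  have hp1 := pi_gt_d4
  have hp2 := pi_lt_d4
  obtain ⟨x, rfl⟩ : ∃ x, θ = π / 2 - x := ⟨π / 2 - θ, by ring⟩
  have hx : 0 < x := by linarith
  have hx2 : x ≤ 0.5209 := by linarith
  have hsin := sin_gt_sub_cube hx
  have hz : 0 < 1 - x ^ 2 / 6 := by nlinarith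
  have hc : hkc (π / 2 - x) ≤ - log x + 1.05 * (x ^ 2 / 6) := by
    unfold hkc
    rw [cos_pi_div_two_sub]
    have h3 := log_le_log (show 0 < x * (1 - x ^ 2 / 6) by positivity) (show x * (1 - x ^ 2 / 6) ≤ sin x by linarith)
    rw [log_mul hx.ne' hz.ne'] at h3
    have h4 := one_sub_inv_le_log_of_pos hz
    have h5 : (1 - x ^ 2 / 6)⁻¹ ≤ 1 + 1.05 * (x ^ 2 / 6) := by
      rw [inv_le_iff_one_le_mul₀ hz]
      nlinarith [sq_nonneg x, mul_nonneg (sq_nonneg x) (show 0 ≤ 0.28 - x ^ 2 by nlinarith)]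
    linarith
  have hcpos : 0 < hkc (π / 2 - x) := by
    have := hkc_pos (π / 2 - x) (by linarith) h2
    have : 0 < (π / 2 - x) ^ 2 / 2 := by
      have : 0 < π / 2 - x := by linarith
      positivity
    linarith
  obtain ⟨G, hG1, hG2⟩ : ∃ G, x * hkc (π / 2 - x) ≤ G ∧ 
      4 * G * (3.1416 + 0.03226 * (2.4672 - x ^ 2) ^ 2) ≤ (2.4672 - x ^ 2) ^ 2 := by
    have h0 : x * hkc (π / 2 - x) ≤ x * (- log x) + 0.175 * x ^ 3 := by
      calc _ ≤ x * (- log x + 1.05 * (x ^ 2 / 6)) := by gcongr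
        _ = _ := by ring
    have l2 := log_two_lt_d9
    rcases le_total x (1 / 4) with h | h
    · refine ⟨_, ?_, hk_poly1 x hx h⟩
      have := hk_philog x (1 / 4) hx (by norm_num)
      rw [show (1:ℝ) / 4 = (2 ^ 2)⁻¹ by norm_num, log_inv, log_pow] at this
      have e : x * (-(-((2:ℕ) * log 2))) ≤ x * 1.3863 := by
        gcongr; norm_num; linarith
      norm_num at *
      linarith
    · refine ⟨_, ?_, hk_poly2 x h hx2⟩
      have := hk_philog x (1 / 2) hx (by norm_num)
      rw [one_div, log_inv] at this
      have e : x * (-(-log 2)) ≤ x * 0.69315 := by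
        gcongr; norm_num; linarith
      norm_num at *
      linarith
  have hA : 2.4672 - x ^ 2 ≤ π ^ 2 / 4 - x ^ 2 := by nlinarith
  have hA0 : 0 < 2.4672 - x ^ 2 := by nlinarith
  set A := π ^ 2 / 4 - x ^ 2 with hAdef
  have hApos : 0 < A := by linarith
  have hU : 1 / (π / 2 - x) ^ 2 - 1 / (π - (π / 2 - x)) ^ 2 + (1 - 2 * (π / 2 - x) / π) / π ^ 2
      = 2 * x * (π / A ^ 2 + 1 / π ^ 3) := by
    have e1 : 0 < π / 2 - x := by linarith
    have e2 : 0 < π / 2 + x := by linarith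
    have e3 : A = (π / 2 - x) * (π / 2 + x) := by rw [hAdef]; ring
    have key : ∀ a b : ℝ, 0 < a → 0 < b → 1 / a ^ 2 - 1 / b ^ 2 + (1 - 2 * a / (a + b)) / (a + b) ^ 2
        = (b - a) * ((a + b) / (a * b) ^ 2 + 1 / (a + b) ^ 3) := by
      intro a b ha hb
      have : a + b ≠ 0 := by positivity
      field_simp
      ring
    have := key _ _ e1 e2
    rw [show π / 2 - x + (π / 2 + x) = π by ring, show π / 2 + x - (π / 2 - x) = 2 * x by ring] at this
    rw [e3, show π - (π / 2 - x) = π / 2 + x by ring, this]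
  rw [hU, le_div_iff₀ (by positivity)]
  have hB : π / A ^ 2 + 1 / π ^ 3 ≤ 3.1416 / (2.4672 - x ^ 2) ^ 2 + 0.03226 := by
    apply add_le_add
    · gcongr
    · rw [div_le_iff₀ (by positivity)]
      have : 3.1415 ^ 3 ≤ π ^ 3 := by gcongr
      norm_num at this ⊢
      linarith
  have hB' : 3.1416 / (2.4672 - x ^ 2) ^ 2 + 0.03226 = (3.1416 + 0.03226 * (2.4672 - x ^ 2) ^ 2) / (2.4672 - x ^ 2) ^ 2 := by
    field_simp
  calc 2 * x * (π / A ^ 2 + 1 / π ^ 3) * (2 * hkc (π / 2 - x)) 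
      = 4 * (x * hkc (π / 2 - x)) * (π / A ^ 2 + 1 / π ^ 3) := by ring
    _ ≤ 4 * G * (3.1416 / (2.4672 - x ^ 2) ^ 2 + 0.03226) := by
      gcongr
      have : 0 ≤ x * hkc (π / 2 - x) := by positivity
      linarith
    _ = 4 * G * (3.1416 + 0.03226 * (2.4672 - x ^ 2) ^ 2) / (2.4672 - x ^ 2) ^ 2 := by rw [hB']; ring
    _ ≤ 1 := by rw [div_le_one (by positivity)]; exact hG2

end part3

section part4
open Real Set MeasureTheory
open scoped ENNReal

noncomputable def hkν (p : ℝ) : Measure ℝ :=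
  (volume.restrict (Ioi 0)).withDensity (fun u => ENNReal.ofReal (u ^ (-p - 1)))

lemma hkν_apply (p : ℝ) {S : Set ℝ} (hS : MeasurableSet S) :
    hkν p S = ∫⁻ u in S ∩ Ioi 0, ENNReal.ofReal (u ^ (-p - 1)) := by
  rw [hkν, withDensity_apply _ hS, Measure.restrict_restrict hS]

lemma hkν_Ioi (p a : ℝ) (hp : 0 < p) (ha : 0 < a) : hkν p (Ioi a) = ENNReal.ofReal (a ^ (-p) / p) := by
  rw [hkν_apply p measurableSet_Ioi, inter_eq_left.2 (Ioi_subset_Ioi ha.le)]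
  rw [← ofReal_integral_eq_lintegral_ofReal]
  · rw [integral_Ioi_rpow_of_lt (by linarith) ha]
    congr 1
    rw [show -p - 1 + 1 = -p by ring]; field_simp
  · exact integrableOn_Ioi_rpow_of_lt (by linarith) ha
  · filter_upwards [ae_restrict_mem measurableSet_Ioi] with x hx
    have : 0 < x := ha.trans hx
    positivity

instance hkν_noAtoms (p : ℝ) : NullSingletonClass (hkν p) := by
  unfold hkν; infer_instance

lemma hkν_Ioc (p a b : ℝ) (hp : 0 < p) (ha : 0 < a) (hab : a ≤ b) :
    hkν p (Ioc a b) = ENNReal.ofReal ((a ^ (-p) - b ^ (-p)) / p) := by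
  rw [← Ioi_sdiff_Ioi, measure_sdiff (Ioi_subset_Ioi hab) measurableSet_Ioi.nullMeasurableSet
    (by rw [hkν_Ioi p b hp (ha.trans_le hab)]; exact ENNReal.ofReal_ne_top),
    hkν_Ioi p b hp (ha.trans_le hab), hkν_Ioi p a hp ha, ← ENNReal.ofReal_sub _ (by have := ha.trans_le hab; positivity)]
  congr 1; ring

lemma hkν_le (p T : ℝ) (hp2 : p ≤ 2) (S : Set ℝ) (hS : MeasurableSet S) (hST : S ⊆ Iic T) (hT : 0 < T) :
    hkν p S ≤ ENNReal.ofReal (T ^ (2 - p)) * hkν 2 S := by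
  rw [hkν_apply p hS, hkν_apply 2 hS, ← lintegral_const_mul' _ _ ENNReal.ofReal_ne_top]
  apply setLIntegral_mono' (hS.inter measurableSet_Ioi)
  intro u hu
  have hu0 : 0 < u := hu.2
  rw [← ENNReal.ofReal_mul (by positivity)]
  apply ENNReal.ofReal_le_ofReal
  have : u ^ (-p - 1) = u ^ (2 - p) * u ^ (-2 - 1 : ℝ) := by
    rw [← rpow_add hu0]; ring_nf
  rw [this]
  gcongr
  exact hST hu.1

lemma hkν_ge (p T : ℝ) (hp2 : p ≤ 2) (S : Set ℝ) (hS : MeasurableSet S) (hST : S ⊆ Ici T) (hT : 0 < T) :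
    ENNReal.ofReal (T ^ (2 - p)) * hkν 2 S ≤ hkν p S := by
  rw [hkν_apply p hS, hkν_apply 2 hS, ← lintegral_const_mul' _ _ ENNReal.ofReal_ne_top]
  apply setLIntegral_mono' (hS.inter measurableSet_Ioi)
  intro u hu
  have hu0 : 0 < u := hu.2
  rw [← ENNReal.ofReal_mul (by positivity)]
  apply ENNReal.ofReal_le_ofReal
  have : u ^ (-p - 1) = u ^ (2 - p) * u ^ (-2 - 1 : ℝ) := by
    rw [← rpow_add hu0]; ring_nf
  rw [this]
  gcongr
  exact hST hu.1

lemma hk_bathtub (p T : ℝ) (hp2 : p ≤ 2) (hT : 0 < T) (A : Set ℝ) (hA : MeasurableSet A)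
    (h : hkν 2 A ≤ hkν 2 (Ioi T)) : hkν p A ≤ hkν p (Ioi T) := by
  have f : hkν 2 (Ioi T) ≠ ∞ := by rw [hkν_Ioi 2 T (by norm_num) hT]; exact ENNReal.ofReal_ne_top
  have e1 := measure_inter_add_sdiff (μ := hkν 2) A (measurableSet_Ioi (a := T))
  have e2 := measure_inter_add_sdiff (μ := hkν 2) (Ioi T) hA
  have e3 : hkν 2 (A \ Ioi T) ≤ hkν 2 (Ioi T \ A) := by
    rw [← e1, ← e2, inter_comm] at h
    refine (ENNReal.add_le_add_iff_left ?_).1 h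
    exact ne_top_of_le_ne_top f (measure_mono inter_subset_left)
  rw [← measure_inter_add_sdiff (μ := hkν p) A (measurableSet_Ioi (a := T)),
    ← measure_inter_add_sdiff (μ := hkν p) (Ioi T) hA, inter_comm]
  refine add_le_add le_rfl ?_
  calc hkν p (A \ Ioi T) ≤ ENNReal.ofReal (T ^ (2 - p)) * hkν 2 (A \ Ioi T) := 
        hkν_le p T hp2 _ (hA.diff measurableSet_Ioi) (fun x hx => by simpa using hx.2) hT
    _ ≤ ENNReal.ofReal (T ^ (2 - p)) * hkν 2 (Ioi T \ A) := by gcongr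
    _ ≤ _ := hkν_ge p T hp2 _ (measurableSet_Ioi.diff hA) (fun x hx => (mem_Ioi.1 hx.1).le) hT

/-- the set where `|cos u| < cos θ` -/
def hkA (θ : ℝ) : Set ℝ := {u | 0 < u ∧ |cos u| < cos θ}

lemma hkA_meas (θ : ℝ) : MeasurableSet (hkA θ) := by
  exact (measurableSet_Ioi).inter (measurableSet_lt (f:=fun u => |cos u|) (g:=fun _ => cos θ) (by fun_prop) measurable_const)

lemma hk_abs_cos_lt (r θ : ℝ) (hθ : 0 < θ) (hθ2 : θ < π / 2) (hr : 0 ≤ r) (hr2 : r < π) :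
    |cos r| < cos θ ↔ θ < r ∧ r < π - θ := by
  rw [abs_lt, ← cos_pi_sub θ]
  rw [(strictAntiOn_cos.lt_iff_gt ⟨by linarith, by linarith⟩ ⟨hr, hr2.le⟩),
    (strictAntiOn_cos.lt_iff_gt ⟨hr, hr2.le⟩ ⟨by linarith, by linarith⟩)]
  exact and_comm

lemma hk_abs_cos_shift (r : ℝ) (k : ℕ) : |cos (r + k * π)| = |cos r| := by
  rw [cos_add_nat_mul_pi]
  simp [abs_mul]

lemma hk_floor (u : ℝ) (hu : 0 < u) : ∃ k : ℕ, ∃ r : ℝ, 0 ≤ r ∧ r < π ∧ u = r + k * π := by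
  refine ⟨⌊u / π⌋₊, u - ⌊u / π⌋₊ * π, ?_, ?_, by ring⟩
  · have := Nat.floor_le (show 0 ≤ u / π by positivity)
    rw [le_div_iff₀ pi_pos] at this; linarith
  · have := Nat.lt_floor_add_one (u / π)
    rw [div_lt_iff₀ pi_pos] at this; linarith

lemma hkA_eq (θ : ℝ) (hθ : 0 < θ) (hθ2 : θ < π / 2) :
    hkA θ = ⋃ k : ℕ, Ioo (θ + k * π) (π - θ + k * π) := by
  ext u
  simp only [hkA, mem_ofPred_eq, mem_iUnion, mem_Ioo]
  constructor
  · rintro ⟨h0, h1⟩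
    obtain ⟨k, r, hr, hr2, rfl⟩ := hk_floor u h0
    rw [hk_abs_cos_shift, hk_abs_cos_lt r θ hθ hθ2 hr hr2] at h1
    exact ⟨k, by linarith, by linarith⟩
  · rintro ⟨k, h1, h2⟩
    have : (0:ℝ) ≤ k * π := by positivity
    refine ⟨by linarith, ?_⟩
    have e : u = (u - k * π) + k * π := by ring
    rw [e, hk_abs_cos_shift, hk_abs_cos_lt _ θ hθ hθ2 (by linarith) (by linarith)]
    exact ⟨by linarith, by linarith⟩

lemma hkB_eq (θ : ℝ) (hθ : 0 < θ) (hθ2 : θ < π / 2) :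
    Ioi θ \ hkA θ = ⋃ k : ℕ, Icc ((k + 1) * π - θ) ((k + 1) * π + θ) := by
  ext u
  simp only [hkA, mem_sdiff, mem_ofPred_eq, mem_iUnion, mem_Icc, mem_Ioi, not_and]
  constructor
  · rintro ⟨h0, h1⟩
    have h1 := h1 (by linarith)
    obtain ⟨k, r, hr, hr2, rfl⟩ := hk_floor u (by linarith)
    rw [hk_abs_cos_shift, hk_abs_cos_lt r θ hθ hθ2 hr hr2, not_and_or] at h1
    push Not at h1
    rcases h1 with h1 | h1
    · rcases k with _ | k
      · simp at h0; linarith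
      · refine ⟨k, ?_, ?_⟩ <;> push_cast <;> linarith
    · exact ⟨k, by linarith, by linarith⟩
  · rintro ⟨k, h1, h2⟩
    have : (0:ℝ) ≤ k * π := by positivity
    refine ⟨by linarith, fun _ => ?_⟩
    rcases lt_or_ge u ((k + 1) * π) with h | h
    · have e : u = (u - k * π) + k * π := by ring
      rw [e, hk_abs_cos_shift, hk_abs_cos_lt _ θ hθ hθ2 (by linarith) (by linarith)]
      rintro ⟨_, h⟩; linarith
    · have e : u = (u - (k + 1 : ℕ) * π) + (k + 1 : ℕ) * π := by ring
      rw [e, hk_abs_cos_shift, hk_abs_cos_lt _ θ hθ hθ2 (by push_cast; linarith) (by push_cast; linarith)]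
      rintro ⟨h, _⟩; push_cast at h; linarith

lemma hkν_B (p θ : ℝ) (hp : 0 < p) (hθ : 0 < θ) (hθ2 : θ < π / 2) :
    hkν p (Ioi θ \ hkA θ) = ∑' k : ℕ, ENNReal.ofReal
      ((((k + 1) * π - θ) ^ (-p) - ((k + 1) * π + θ) ^ (-p)) / p) := by
  rw [hkB_eq θ hθ hθ2, measure_iUnion]
  · congr 1; ext k
    have : (0:ℝ) ≤ k * π := by positivity
    rw [measure_congr Ioc_ae_eq_Icc.symm, hkν_Ioc p _ _ hp (by linarith) (by linarith)]
  · have : ∀ i j : ℕ, i < j → Disjoint (Icc ((i + 1) * π - θ) ((i + 1) * π + θ)) (Icc ((j + 1) * π - θ) ((j + 1) * π + θ)) := by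
      intro i j hij
      rw [Set.disjoint_left]
      rintro x ⟨_, h1⟩ ⟨h2, _⟩
      have : (i : ℝ) + 1 ≤ j := by exact_mod_cast hij
      nlinarith [pi_pos]
    intro i j hij
    rcases lt_or_gt_of_ne hij with h | h
    · exact this i j h
    · exact (this j i h).symm
  · intro k; exact measurableSet_Icc

lemma hkN_mono (p m θ θ2 : ℝ) (hp : 0 < p) (hθ : 0 < θ) (h : θ ≤ θ2) (hm : θ2 < m) :
    θ2 * ((m - θ) ^ (-p) - (m + θ) ^ (-p)) ≤ θ * ((m - θ2) ^ (-p) - (m + θ2) ^ (-p)) := by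
  have hc : ConvexOn ℝ (Icc 0 θ2) (fun x => (m - x) ^ (-p) - (m + x) ^ (-p)) := by
    have d1 : ∀ (r : ℝ), ∀ x ∈ Icc 0 θ2, HasDerivAt (fun x => (m - x) ^ r) (-1 * r * (m - x) ^ (r - 1)) x := by
      intro r x hx
      exact ((hasDerivAt_id x).const_sub m).rpow_const (Or.inl (by have := hx.2; simp; linarith))
    have d2 : ∀ (r : ℝ), ∀ x ∈ Icc 0 θ2, HasDerivAt (fun x => (m + x) ^ r) (1 * r * (m + x) ^ (r - 1)) x := by
      intro r x hx
      exact ((hasDerivAt_id x).const_add m).rpow_const (Or.inl (by have := hx.2; have := hx.1; simp; linarith))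
    apply convexOn_of_hasDerivWithinAt2_nonneg (convex_Icc 0 θ2)
      (f' := fun x => -1 * -p * (m - x) ^ (-p - 1) - 1 * -p * (m + x) ^ (-p - 1))
      (f'' := fun x => -1 * -p * (-1 * (-p - 1) * (m - x) ^ (-p - 1 - 1)) - 1 * -p * (1 * (-p - 1) * (m + x) ^ (-p - 1 - 1)))
    · intro x hx
      exact ((d1 _ x hx).sub (d2 _ x hx)).continuousAt.continuousWithinAt
    · intro x hx
      have hx := interior_subset hx
      exact ((d1 _ x hx).sub (d2 _ x hx)).hasDerivWithinAt
    · intro x hx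
      have hx := interior_subset hx
      exact (((d1 _ x hx).const_mul _).sub ((d2 _ x hx).const_mul _)).hasDerivWithinAt
    · intro x hx
      have hx := interior_subset hx
      have h1 : (m + x) ^ (-p - 1 - 1) ≤ (m - x) ^ (-p - 1 - 1) := 
        rpow_le_rpow_of_nonpos (by linarith [hx.2]) (by linarith [hx.1]) (by linarith)
      have : -1 * -p * (-1 * (-p - 1) * (m - x) ^ (-p - 1 - 1)) - 1 * -p * (1 * (-p - 1) * (m + x) ^ (-p - 1 - 1))
        = p * (p + 1) * ((m - x) ^ (-p - 1 - 1) - (m + x) ^ (-p - 1 - 1)) := by ring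
      rw [this]
      apply mul_nonneg (by positivity) (by linarith)
  have h2 : 0 < θ2 := by linarith
  have := hc.2 ⟨le_rfl, h2.le⟩ ⟨h2.le, le_rfl⟩ 
    (show 0 ≤ 1 - θ / θ2 by rw [sub_nonneg, div_le_one h2]; exact h) (show 0 ≤ θ / θ2 by positivity) (by ring)
  simp only [smul_eq_mul, mul_zero, zero_add, sub_zero, add_zero, sub_self] at this
  rw [div_mul_cancel₀ _ h2.ne', div_mul_eq_mul_div, le_div_iff₀ h2] at this
  linarith

lemma hkB_mono (p θ θ2 : ℝ) (hp : 0 < p) (hθ : 0 < θ) (h : θ ≤ θ2) (h2 : θ2 < π / 2) :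
    ENNReal.ofReal θ2 * hkν p (Ioi θ \ hkA θ) ≤ ENNReal.ofReal θ * hkν p (Ioi θ2 \ hkA θ2) := by
  rw [hkν_B p θ hp hθ (by linarith), hkν_B p θ2 hp (by linarith) h2, ← ENNReal.tsum_mul_left, ← ENNReal.tsum_mul_left]
  apply ENNReal.tsum_le_tsum
  intro k
  rw [← ENNReal.ofReal_mul (by linarith), ← ENNReal.ofReal_mul (by linarith)]
  apply ENNReal.ofReal_le_ofReal
  have : (0:ℝ) ≤ k * π := by positivity
  rw [← mul_div_assoc, ← mul_div_assoc]
  exact div_le_div_of_nonneg_right (hkN_mono p _ θ θ2 hp hθ h (by linarith)) hp.le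

end part4

section part5
open Real Set MeasureTheory
open scoped ENNReal

lemma hk_disj (c d : ℝ) (h0 : d ≤ c + π) : Pairwise (Function.onFun Disjoint (fun k : ℕ => Ioc (c + k * π) (d + k * π))) := by
  have : ∀ i j : ℕ, i < j → Disjoint (Ioc (c + i * π) (d + i * π)) (Ioc (c + j * π) (d + j * π)) := by
    intro i j hij
    rw [Set.disjoint_left]
    rintro x ⟨_, h1⟩ ⟨h2, _⟩
    have : (i : ℝ) + 1 ≤ j := by exact_mod_cast hij
    nlinarith [pi_pos]
  intro i j hij
  rcases lt_or_gt_of_ne hij with h | h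
  · exact this i j h
  · exact (this j i h).symm

lemma hkν_A (p θ : ℝ) (hp : 0 < p) (hθ : 0 < θ) (hθ2 : θ < π / 2) :
    hkν p (hkA θ) ≤ ∑' k : ℕ, ENNReal.ofReal
      (((θ + k * π) ^ (-p) - (π - θ + k * π) ^ (-p)) / p) := by
  rw [hkA_eq θ hθ hθ2]
  refine (measure_iUnion_le _).trans ?_
  apply ENNReal.tsum_le_tsum
  intro k
  have : (0:ℝ) ≤ k * π := by positivity
  rw [measure_congr Ioo_ae_eq_Ioc, hkν_Ioc p _ _ hp (by linarith) (by linarith)]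

lemma hkν_A2 (θ : ℝ) (hθ : 0 < θ) (hθ2 : θ < π / 2) :
    hkν 2 (hkA θ) ≤ ENNReal.ofReal ((1/θ^2 - 1/(π-θ)^2 + (1-2*θ/π)/π^2) / 2) := by
  refine (hkν_A 2 θ (by norm_num) hθ hθ2).trans ?_
  rw [tsum_eq_zero_add' ENNReal.summable]
  have e : ∀ x : ℝ, 0 < x → x ^ (-2 : ℝ) = 1 / x ^ 2 := by
    intro x hx
    rw [rpow_neg hx.le]; norm_num
  have ht : 0 < 1 - 2 * θ / π := by
    rw [sub_pos, div_lt_one pi_pos]; linarith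
  have hb : ∑' k : ℕ, ENNReal.ofReal (((θ + (k + 1 : ℕ) * π) ^ (-2:ℝ) - (π - θ + (k + 1 : ℕ) * π) ^ (-2:ℝ)) / 2)
      ≤ ENNReal.ofReal (1 - 2 * θ / π) * hkν 2 (Ioi π) := by
    have h1 : ∑' k : ℕ, hkν 2 (Ioc (π + k * π) (2 * π + k * π)) ≤ hkν 2 (Ioi π) := by
      rw [← measure_iUnion (hk_disj _ _ (by linarith)) (fun k => measurableSet_Ioc)]
      apply measure_mono
      apply iUnion_subset
      intro k x hx
      have : (0:ℝ) ≤ k * π := by positivity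
      simp only [mem_Ioi]; linarith [hx.1]
    refine le_trans ?_ (mul_le_mul_right h1 _)
    rw [← ENNReal.tsum_mul_left]
    apply ENNReal.tsum_le_tsum
    intro k
    have : (0:ℝ) ≤ k * π := by positivity
    rw [hkν_Ioc 2 _ _ (by norm_num) (by linarith [pi_pos]) (by linarith [pi_pos]), ← ENNReal.ofReal_mul ht.le]
    apply ENNReal.ofReal_le_ofReal
    have := hkN_mono 2 ((k + 3/2) * π) (π / 2 - θ) (π / 2) (by norm_num) (by linarith) (by linarith) (by linarith [pi_pos])
    rw [show (k + 3/2) * π - (π / 2 - θ) = θ + (k + 1 : ℕ) * π by push_cast; ring,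
      show (k + 3/2) * π + (π / 2 - θ) = π - θ + (k + 1 : ℕ) * π by push_cast; ring,
      show (k + 3/2) * π - π / 2 = π + k * π by ring, show (k + 3/2) * π + π / 2 = 2 * π + k * π by ring] at this
    have h3 : (1 - 2 * θ / π) = (π / 2 - θ) / (π / 2) := by field_simp
    rw [h3, div_mul_eq_mul_div, le_div_iff₀ (by positivity)]
    linarith
  refine (add_le_add le_rfl hb).trans ?_
  rw [hkν_Ioi 2 π (by norm_num) pi_pos, ← ENNReal.ofReal_mul ht.le, ← ENNReal.ofReal_add]
  · apply ENNReal.ofReal_le_ofReal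
    rw [e π pi_pos]
    simp only [CharP.cast_eq_zero, zero_mul, add_zero]
    rw [e θ hθ, e (π - θ) (by linarith)]
    apply le_of_eq; ring
  · simp only [CharP.cast_eq_zero, zero_mul, add_zero]
    rw [e θ hθ, e (π - θ) (by linarith)]
    apply div_nonneg _ (by norm_num)
    rw [sub_nonneg]
    gcongr <;> linarith
  · positivity

noncomputable def hkT (θ : ℝ) : ℝ := √(2 * hkc θ)

lemma hkT_pos (θ : ℝ) (hθ : 0 < θ) (hθ2 : θ < π / 2) : 0 < hkT θ := by
  have := hkc_pos θ hθ hθ2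
  apply sqrt_pos.2
  have : 0 < θ ^ 2 / 2 := by positivity
  linarith

lemma hkν_T (p θ : ℝ) (hp : 0 < p) (hθ : 0 < θ) (hθ2 : θ < π / 2) :
    hkν p (Ioi (hkT θ)) = ENNReal.ofReal ((2 * hkc θ) ^ (-(p/2)) / p) := by
  have := hkc_pos θ hθ hθ2
  have : 0 < θ ^ 2 / 2 := by positivity
  rw [hkν_Ioi p _ hp (hkT_pos θ hθ hθ2), hkT, sqrt_eq_rpow, ← rpow_mul (by linarith)]
  ring_nf

lemma hk_large (p θ : ℝ) (hp2 : p ≤ 2) (hθ : 1.05 ≤ θ) (hθ2 : θ < π / 2) :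
    hkν p (hkA θ) ≤ hkν p (Ioi (hkT θ)) := by
  have h0 : 0 < θ := by linarith
  have := hkc_pos θ h0 hθ2
  have : 0 < θ ^ 2 / 2 := by positivity
  apply hk_bathtub p _ hp2 (hkT_pos θ h0 hθ2) _ (hkA_meas θ)
  refine (hkν_A2 θ h0 hθ2).trans ?_
  rw [hkν_T 2 θ (by norm_num) h0 hθ2]
  apply ENNReal.ofReal_le_ofReal
  have := hk_U θ hθ hθ2
  rw [show -((2:ℝ)/2) = -1 by norm_num, rpow_neg_one, ← one_div]
  gcongr

lemma hk_SC (p θ θ2 : ℝ) (hp : 3/2 ≤ p) (hp2 : p ≤ 2) (hθ : 0 < θ) (h : θ < θ2) (hθ2 : θ2 < π / 2)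
    (hc : hkν p (Ioi (hkT θ2)) < hkν p (hkA θ2)) : hkν p (Ioi (hkT θ)) ≤ hkν p (hkA θ) := by
  have h105 : θ2 < 1.05 := by
    by_contra hh
    push Not at hh
    exact absurd (hk_large p θ2 hp2 hh hθ2) (not_le.2 hc)
  have hp0 : 0 < p := by linarith
  have key : ∀ x, 0 < x → x < π / 2 → hkν p (Ioi x) = hkν p (hkA x) + hkν p (Ioi x \ hkA x) := by
    intro x hx hx2
    rw [← measure_inter_add_sdiff (μ := hkν p) (Ioi x) (hkA_meas x)]
    congr 2
    apply inter_eq_right.2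
    rw [hkA_eq x hx hx2]
    apply iUnion_subset
    intro k y hy
    have : (0:ℝ) ≤ k * π := by positivity
    simp only [mem_Ioi]; linarith [hy.1]
  have hpos : ∀ x, 0 < x → x < π / 2 → 0 < 2 * hkc x := by
    intro x hx hx2
    have := hkc_pos x hx hx2
    have : 0 < x ^ 2 / 2 := by positivity
    linarith
  have k1 := key θ hθ (by linarith)
  have k2 := key θ2 (by linarith) hθ2
  have hB := hkB_mono p θ θ2 hp0 hθ h.le hθ2
  rw [hkν_Ioi p _ hp0 (by linarith)] at k1 k2
  rw [hkν_T p _ hp0 (by linarith) (by linarith)] at hc ⊢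
  have f1 : hkν p (hkA θ) ≠ ∞ := ne_top_of_le_ne_top ENNReal.ofReal_ne_top (k1 ▸ le_self_add)
  have f2 : hkν p (hkA θ2) ≠ ∞ := ne_top_of_le_ne_top ENNReal.ofReal_ne_top (k2 ▸ le_self_add)
  have g1 : hkν p (Ioi θ \ hkA θ) ≠ ∞ := ne_top_of_le_ne_top ENNReal.ofReal_ne_top (k1 ▸ le_add_self)
  have g2 : hkν p (Ioi θ2 \ hkA θ2) ≠ ∞ := ne_top_of_le_ne_top ENNReal.ofReal_ne_top (k2 ▸ le_add_self)
  lift hkν p (hkA θ) to NNReal using f1 with a1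
  lift hkν p (hkA θ2) to NNReal using f2 with a2
  lift hkν p (Ioi θ \ hkA θ) to NNReal using g1 with b1
  lift hkν p (Ioi θ2 \ hkA θ2) to NNReal using g2 with b2
  have h2 : 0 < θ2 := by linarith
  have e1 := congrArg ENNReal.toReal k1
  have e2 := congrArg ENNReal.toReal k2
  have e3 := (ENNReal.toReal_le_toReal (by finiteness) (by finiteness)).2 hB
  have e4 := (ENNReal.toReal_lt_toReal (by finiteness) (by finiteness)).2 hc
  rw [← ENNReal.toReal_le_toReal (by finiteness) (by finiteness)]
  have q1 := hpos θ hθ (by linarith)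
  have q2 := hpos θ2 h2 hθ2
  rw [ENNReal.toReal_ofReal (by positivity)] at e1 e2 e4 ⊢
  rw [ENNReal.toReal_mul, ENNReal.toReal_mul, ENNReal.toReal_ofReal h2.le, ENNReal.toReal_ofReal hθ.le] at e3
  rw [ENNReal.toReal_add (by finiteness) (by finiteness)] at e1 e2
  simp only [ENNReal.coe_toReal] at *
  have hD := hk_D_anti p hp hp2 ⟨hθ, by linarith⟩ ⟨h2, h105.le⟩ h.le
  simp only at hD
  rw [div_le_div_iff₀ h2 hθ] at hD
  generalize θ ^ (-p) = X1 at *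
  generalize θ2 ^ (-p) = X2 at *
  generalize (2 * hkc θ) ^ (-(p/2)) = Y1 at *
  generalize (2 * hkc θ2) ^ (-(p/2)) = Y2 at *
  rw [div_eq_iff hp0.ne'] at e1 e2
  rw [div_lt_iff₀ hp0] at e4
  rw [div_le_iff₀ hp0]
  -- b2 p = X2 - a2 p < X2 - Y2;  θ2 b1 ≤ θ b2;  (X2-Y2) θ ≤ (X1-Y1) θ2
  have r1 : b2 * p ≤ X2 - Y2 := by nlinarith
  have r2 : θ2 * b1 * p ≤ θ * b2 * p := by gcongr
  have r3 : θ * (b2 * p) ≤ θ * (X2 - Y2) := by gcongr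
  have r4 : θ2 * (b1 * p) ≤ θ2 * (X1 - Y1) := by nlinarith
  have r5 := le_of_mul_le_mul_left r4 h2
  linarith

end part5

section part6
open Real Set MeasureTheory
open scoped ENNReal

lemma hk_layer (ν : Measure ℝ) (f : ℝ → ℝ) (hf : Measurable f) (h0 : ∀ u, 0 ≤ f u) (h1 : ∀ u, f u ≤ 1)
    (s : ℝ) (hs : 2 ≤ s) :
    ∫⁻ u, ENNReal.ofReal (1 - f u ^ s) ∂ν
      = ∫⁻ t in Ioi 0, ν {u | f u < 1 - t} * ENNReal.ofReal (s * |1 - t| ^ (s - 1)) := by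
  have hg : Continuous (fun t : ℝ => s * |1 - t| ^ (s - 1)) :=
    continuous_const.mul ((continuous_const.sub continuous_id).abs.rpow_const (fun x => Or.inr (by linarith)))
  have := lintegral_comp_eq_lintegral_meas_lt_mul ν (f := fun u => 1 - f u) 
    (g := fun t => s * |1 - t| ^ (s - 1)) (Filter.Eventually.of_forall (fun u => by simpa using h1 u)) 
    (by fun_prop) (fun t _ => hg.intervalIntegrable _ _) (Filter.Eventually.of_forall (fun u => by positivity))
  have e : ∀ t, {u | t < 1 - f u} = {u | f u < 1 - t} := by
    intro t; ext u; simp only [mem_ofPred_eq]; constructor <;> intro h <;> linarith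
  simp only [e] at this
  rw [← this]
  congr 1; ext u; congr 1
  have hd : ∀ x ∈ uIcc 0 (1 - f u), HasDerivAt (fun t => -(1 - t) ^ s) (s * |1 - x| ^ (s - 1)) x := by
    intro x hx
    rw [uIcc_of_le (by linarith [h1 u])] at hx
    have h3 : 0 ≤ 1 - x := by linarith [hx.2, h0 u]
    rw [abs_of_nonneg h3]
    exact (((hasDerivAt_id x).const_sub 1).rpow_const (Or.inr (by linarith))).neg.congr_deriv (by simp)
  rw [intervalIntegral.integral_eq_sub_of_hasDerivAt (f := fun t => -(1 - t) ^ s) hd (hg.intervalIntegrable _ _)]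
  simp
  ring

lemma hk_enn (w c a b : ℝ≥0∞) (h : c ≤ w) (h2 : b ≤ a) : w * b + c * a ≤ w * a + c * b := by
  obtain ⟨d, rfl⟩ := exists_add_of_le h
  obtain ⟨e, rfl⟩ := exists_add_of_le h2
  have : (c + d) * (b + e) + c * b = (c + d) * b + c * (b + e) + d * e := by ring
  rw [this]; exact le_self_add

lemma hk_setA (p θ : ℝ) : hkν p {u | |cos u| < cos θ} = hkν p (hkA θ) := by
  have m : MeasurableSet {u | |cos u| < cos θ} := measurableSet_lt (f:=fun u => |cos u|) (g:=fun _ => cos θ) (by fun_prop) measurable_const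
  rw [hkν_apply p m, hkν_apply p (hkA_meas θ)]
  congr 2
  ext u; simp only [hkA, mem_inter_iff, mem_ofPred_eq, mem_Ioi]; tauto

lemma hk_setB (p θ : ℝ) (hθ : 0 < θ) (hθ2 : θ < π / 2) :
    hkν p {u | exp (-u^2/2) < cos θ} = hkν p (Ioi (hkT θ)) := by
  have m : MeasurableSet {u | exp (-u^2/2) < cos θ} := measurableSet_lt (f:=fun u => exp (-u^2/2)) (g:=fun _ => cos θ) (by fun_prop) measurable_const
  rw [hkν_apply p m, hkν_apply p measurableSet_Ioi]
  congr 2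
  ext u; simp only [mem_inter_iff, mem_ofPred_eq, mem_Ioi]
  apply and_congr_left
  intro hu
  have hc : 0 < cos θ := cos_pos_of_mem_Ioo ⟨by linarith, hθ2⟩
  rw [hkT, sqrt_lt' hu, ← lt_log_iff_exp_lt hc, hkc]
  constructor <;> intro h <;> linarith

lemma hk_F (p : ℝ) (hp : 3/2 ≤ p) (hp2 : p ≤ 2) 
    (h2 : ∫⁻ u, ENNReal.ofReal (1 - exp (-u^2/2) ^ (2:ℝ)) ∂(hkν p) ≤ ∫⁻ u, ENNReal.ofReal (1 - |cos u| ^ (2:ℝ)) ∂(hkν p))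
    (hfin : ∫⁻ u, ENNReal.ofReal (1 - |cos u| ^ (2:ℝ)) ∂(hkν p) ≠ ∞) (s : ℝ) (hs : 2 ≤ s) :
    ∫⁻ u, ENNReal.ofReal (1 - exp (-u^2/2) ^ s) ∂(hkν p) ≤ ∫⁻ u, ENNReal.ofReal (1 - |cos u| ^ s) ∂(hkν p) := by
  have la := hk_layer (hkν p) (fun u => |cos u|) (by fun_prop) (fun u => abs_nonneg _) (fun u => abs_cos_le_one u)
  have lb := hk_layer (hkν p) (fun u => exp (-u^2/2)) (by fun_prop) (fun u => (exp_pos _).le) 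
    (fun u => by rw [exp_le_one_iff]; nlinarith [sq_nonneg u])
  rw [la s hs, lb s hs]
  rw [la 2 le_rfl, lb 2 le_rfl] at h2
  rw [la 2 le_rfl] at hfin
  set a : ℝ → ℝ≥0∞ := fun t => hkν p {u | |cos u| < 1 - t} with ha
  set b : ℝ → ℝ≥0∞ := fun t => hkν p {u | exp (-u^2/2) < 1 - t} with hb
  have ma : Measurable a := by
    have : Antitone a := fun x y hxy => measure_mono (fun u hu => by simp only [mem_ofPred_eq] at *; linarith)
    exact this.measurable
  have mb : Measurable b := by
    have : Antitone b := fun x y hxy => measure_mono (fun u hu => by simp only [mem_ofPred_eq] at *; linarith)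
    exact this.measurable
  have sc : ∀ t t2, 0 < t → t < t2 → t2 < 1 → b t2 < a t2 → b t ≤ a t := by
    intro t t2 h1 h2 h3 h4
    have key : ∀ t, 0 < t → t < 1 → 0 < arccos (1 - t) ∧ arccos (1 - t) < π / 2 ∧ cos (arccos (1 - t)) = 1 - t := by
      intro t h h'
      refine ⟨arccos_pos.2 (by linarith), ?_, cos_arccos (by linarith) (by linarith)⟩
      rw [arccos_lt_pi_div_two]; linarith
    obtain ⟨x1, x2, x3⟩ := key t h1 (by linarith)
    obtain ⟨y1, y2, y3⟩ := key t2 (by linarith) h3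
    have hlt : arccos (1 - t) < arccos (1 - t2) := 
      strictAntiOn_arccos ⟨by linarith, by linarith⟩ ⟨by linarith, by linarith⟩ (by linarith)
    have := hk_SC p _ _ hp hp2 x1 hlt y2
    rw [← hk_setA, ← hk_setA, ← hk_setB _ _ x1 x2, ← hk_setB _ _ y1 y2, x3, y3] at this
    exact this h4
  have tail : ∀ t, 1 ≤ t → a t = 0 ∧ b t = 0 := by
    intro t ht
    constructor
    · have : {u | |cos u| < 1 - t} = ∅ := by
        ext u; simp only [mem_ofPred_eq, mem_empty_iff_false, iff_false, not_lt]
        linarith [abs_nonneg (cos u)]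
      simp [ha, this]
    · have : {u | exp (-u^2/2) < 1 - t} = ∅ := by
        ext u; simp only [mem_ofPred_eq, mem_empty_iff_false, iff_false, not_lt]
        linarith [exp_pos (-u^2/2)]
      simp [hb, this]
  set D : Set ℝ := {t | 0 < t ∧ t < 1 ∧ b t < a t} with hD
  have bdd : BddAbove D := ⟨1, fun t ht => ht.2.1.le⟩
  set t0 := sSup D with ht0
  have t01 : t0 ≤ 1 := Real.sSup_le (fun t ht => ht.2.1.le) (by norm_num)
  have t00 : 0 ≤ t0 := Real.sSup_nonneg (fun t ht => ht.1.le)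
  set c : ℝ≥0∞ := ENNReal.ofReal ((1 - t0) ^ (s - 2)) with hc
  set w : ℝ → ℝ≥0∞ := fun t => ENNReal.ofReal (|1 - t| ^ (s - 2)) with hw
  have pw : ∀ t ∈ Ioi (0:ℝ), w t * b t + c * a t ≤ w t * a t + c * b t := by
    intro t ht
    rcases lt_or_ge t 1 with h1 | h1
    · rcases lt_trichotomy t t0 with h | h | h
      · obtain ⟨t2, ht2, h4⟩ := exists_lt_of_lt_csSup (by
          by_contra hne
          rw [Set.not_nonempty_iff_eq_empty] at hne
          rw [ht0, hne, Real.sSup_empty] at h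
          exact absurd ht (not_lt.2 h.le)) h
        apply hk_enn _ _ _ _ _ (sc t t2 ht h4 ht2.2.1 ht2.2.2)
        apply ENNReal.ofReal_le_ofReal
        rw [abs_of_nonneg (by linarith)]
        apply rpow_le_rpow (by linarith) (by linarith) (by linarith)
      · have : w t = c := by simp only [hw, hc]; rw [abs_of_nonneg (by linarith), h]
        rw [this]; exact (add_comm _ _).le
      · have : a t ≤ b t := by
          by_contra hh
          exact absurd (le_csSup bdd (show t ∈ D from ⟨ht, h1, not_le.1 hh⟩)) (not_le.2 h)
        rw [add_comm, add_comm (w t * a t)]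
        apply hk_enn _ _ _ _ _ this
        apply ENNReal.ofReal_le_ofReal
        rw [abs_of_nonneg (by linarith)]
        apply rpow_le_rpow (by linarith) (by linarith) (by linarith)
    · rw [(tail t h1).1, (tail t h1).2]
  set W : ℝ → ℝ≥0∞ := fun t => ENNReal.ofReal |1 - t| with hW
  have mw : Measurable w := by fun_prop
  have mW : Measurable W := by fun_prop
  have es : ∀ t, ENNReal.ofReal (s * |1 - t| ^ (s - 1)) = ENNReal.ofReal s * (w t * W t) := by
    intro t
    simp only [hw, hW]
    rw [← ENNReal.ofReal_mul (by positivity), ← ENNReal.ofReal_mul (by positivity)]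
    congr 2
    rcases eq_or_lt_of_le (abs_nonneg (1 - t)) with h | h
    · rw [← h, mul_zero, zero_rpow (by linarith)]
    · rw [← rpow_add_one h.ne']; ring_nf
  have e2 : ∀ t, ENNReal.ofReal (2 * |1 - t| ^ ((2:ℝ) - 1)) = ENNReal.ofReal 2 * W t := by
    intro t
    rw [← ENNReal.ofReal_mul (by norm_num), show (2:ℝ) - 1 = 1 by norm_num, rpow_one]
  have Es : ∀ g : ℝ → ℝ≥0∞, Measurable g → ∫⁻ t in Ioi 0, g t * ENNReal.ofReal (s * |1 - t| ^ (s - 1))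
      = ENNReal.ofReal s * ∫⁻ t in Ioi 0, w t * g t * W t := by
    intro g hg
    rw [← lintegral_const_mul _ (by fun_prop)]
    congr 1; ext t; rw [es]; ring
  have E2 : ∀ g : ℝ → ℝ≥0∞, Measurable g → ∫⁻ t in Ioi 0, g t * ENNReal.ofReal (2 * |1 - t| ^ ((2:ℝ) - 1))
      = ENNReal.ofReal 2 * ∫⁻ t in Ioi 0, g t * W t := by
    intro g hg
    rw [← lintegral_const_mul _ (by fun_prop)]
    congr 1; ext t; rw [e2]; ring
  have E2a := E2 a ma
  have E2b := E2 b mb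
  have Esa := Es a ma
  have Esb := Es b mb
  simp only [ha, hb] at E2a E2b Esa Esb
  rw [E2a] at hfin
  rw [E2a, E2b] at h2
  rw [Esa, Esb]
  apply mul_le_mul_right
  have h2' := (ENNReal.mul_le_mul_iff_right (by simp) ENNReal.ofReal_ne_top).1 h2
  have hfin' : ∫⁻ t in Ioi 0, a t * W t ≠ ∞ := fun hh => hfin (by
    simp only [ha] at hh; rw [hh]; simp)
  have I : ∫⁻ t in Ioi 0, (w t * b t + c * a t) * W t ≤ ∫⁻ t in Ioi 0, (w t * a t + c * b t) * W t := by
    apply setLIntegral_mono' measurableSet_Ioi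
    intro t ht
    exact mul_le_mul_left (pw t ht) _
  simp only [add_mul, mul_assoc c] at I
  rw [lintegral_add_left (by fun_prop), lintegral_add_left (by fun_prop), lintegral_const_mul _ (by fun_prop), lintegral_const_mul _ (by fun_prop)] at I
  have hfc : c * ∫⁻ t in Ioi 0, a t * W t ≠ ∞ := ENNReal.mul_ne_top ENNReal.ofReal_ne_top hfin'
  refine (ENNReal.add_le_add_iff_right hfc).1 (I.trans ?_)
  refine add_le_add le_rfl ?_
  exact mul_le_mul_right h2' _

end part6

section part7
open Real Set MeasureTheory
open scoped ENNReal

lemma hkν_lintegral (p : ℝ) (h : ℝ → ℝ≥0∞) (hh : Measurable h) :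
    ∫⁻ u, h u ∂(hkν p) = ∫⁻ u in Ioi 0, ENNReal.ofReal (u ^ (-p - 1)) * h u := by
  rw [hkν, lintegral_withDensity_eq_lintegral_mul _ (by fun_prop) hh]; rfl

lemma hkν_scale (p a : ℝ) (ha : 0 < a) (h : ℝ → ℝ≥0∞) (hh : Measurable h) :
    ∫⁻ u, h (a * u) ∂(hkν p) = ENNReal.ofReal (a ^ p) * ∫⁻ u, h u ∂(hkν p) := by
  rw [hkν_lintegral p _ (by fun_prop), hkν_lintegral p _ hh]
  have := lintegral_image_eq_lintegral_abs_deriv_mul (s := Ioi 0) (f := fun u => a * u) (f' := fun _ => a)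
    measurableSet_Ioi (fun x _ => ((hasDerivAt_id x).const_mul a).hasDerivWithinAt.congr_deriv (by simp))
    (fun x _ y _ hxy => mul_left_cancel₀ ha.ne' hxy) (fun x => ENNReal.ofReal (x ^ (-p - 1)) * h x)
  have im : (fun u => a * u) '' Ioi 0 = Ioi 0 := by
    ext x; constructor
    · rintro ⟨y, hy, rfl⟩; exact mul_pos ha hy
    · intro hx; exact ⟨x / a, div_pos hx ha, by field_simp⟩
  rw [im] at this
  rw [this, ← lintegral_const_mul _ (by fun_prop)]
  apply setLIntegral_congr_fun measurableSet_Ioi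
  intro u hu
  simp only
  rw [← mul_assoc, ← mul_assoc, ← ENNReal.ofReal_mul (by positivity), ← ENNReal.ofReal_mul (by positivity)]
  congr 2
  rw [mul_rpow ha.le (mem_Ioi.1 hu).le, abs_of_pos ha, ← mul_assoc]
  have : a ^ p * a * a ^ (-p - 1) = 1 := by
    rw [← rpow_add_one ha.ne', ← rpow_add ha]; ring_nf; simp
  rw [this, one_mul]

noncomputable def hkKK (p : ℝ) : ℝ≥0∞ := ∫⁻ u, ENNReal.ofReal (1 - cos u) ∂(hkν p)

lemma hkKK_ne_top (p : ℝ) (hp : 1 < p) (hp2 : p < 2) : hkKK p ≠ ∞ := by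
  have h1 : hkKK p ≤ ∫⁻ u, (ENNReal.ofReal (u ^ 2) * (Ioc 0 1).indicator 1 u + 2 * (Ioi 1).indicator 1 u) ∂(hkν p) := by
    rw [hkKK, hkν_lintegral p _ (by fun_prop), hkν_lintegral p _ ?_]
    · apply setLIntegral_mono' measurableSet_Ioi
      intro u hu
      gcongr
      rcases le_or_gt u 1 with h | h
      · simp only [indicator, mem_Ioc, mem_Ioi.1 hu, h, true_and, if_true, Pi.one_apply, mul_one]
        refine le_trans (ENNReal.ofReal_le_ofReal ?_) le_self_add
        nlinarith [one_sub_sq_div_two_le_cos (x := u), sq_nonneg u]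
      · simp only [indicator, mem_Ioi, h, if_true, Pi.one_apply, mul_one]
        refine le_trans ?_ le_add_self
        rw [← ENNReal.ofReal_ofNat]
        apply ENNReal.ofReal_le_ofReal
        linarith [neg_one_le_cos u]
    · exact ((by fun_prop : Measurable fun u : ℝ => ENNReal.ofReal (u^2)).mul (measurable_one.indicator measurableSet_Ioc)).add
        (measurable_const.mul (measurable_one.indicator measurableSet_Ioi))
  refine ne_top_of_le_ne_top ?_ h1
  have mm : Measurable (fun u : ℝ => ENNReal.ofReal (u^2) * (Ioc (0:ℝ) 1).indicator 1 u) :=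
    ((by fun_prop : Measurable fun u : ℝ => ENNReal.ofReal (u^2)).mul (measurable_one.indicator measurableSet_Ioc))
  rw [lintegral_add_left mm]
  apply ENNReal.add_ne_top.2
  constructor
  · rw [hkν_lintegral p _ mm]
    have : ∫⁻ u in Ioi 0, ENNReal.ofReal (u ^ (-p - 1)) * (ENNReal.ofReal (u ^ 2) * (Ioc 0 1).indicator 1 u)
        = ∫⁻ u in Ioc 0 1, ENNReal.ofReal (u ^ (1 - p)) := by
      rw [← lintegral_indicator measurableSet_Ioi, ← lintegral_indicator measurableSet_Ioc]
      congr 1; ext u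
      by_cases hu : 0 < u
      · by_cases h : u ≤ 1
        · simp only [indicator, mem_Ioi, mem_Ioc, hu, h, and_self, if_true, Pi.one_apply, mul_one]
          rw [← ENNReal.ofReal_mul (by positivity), ← rpow_natCast, ← rpow_add hu]
          congr 2; push_cast; ring
        · simp [indicator, hu, h]
      · simp [indicator, hu]
    rw [this]
    have hi : IntegrableOn (fun u : ℝ => u ^ (1 - p)) (Ioc 0 1) := by
      have := intervalIntegral.intervalIntegrable_rpow' (a := 0) (b := 1) (r := 1 - p) (by linarith)
      rwa [intervalIntegrable_iff_integrableOn_Ioc_of_le zero_le_one] at this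
    exact hi.lintegral_lt_top.ne
  · rw [lintegral_const_mul _ (measurable_one.indicator measurableSet_Ioi), lintegral_indicator_one measurableSet_Ioi,
      hkν_Ioi p 1 (by linarith) one_pos]
    finiteness

lemma hkKK_ne_zero (p : ℝ) (hp : 1 < p) : hkKK p ≠ 0 := by
  have h : hkν p (Ioc (π/2) π) ≤ hkKK p := by
    rw [hkKK, ← lintegral_indicator_one measurableSet_Ioc]
    apply lintegral_mono
    intro u
    by_cases hu : u ∈ Ioc (π/2) π
    · simp only [indicator, hu, if_true, Pi.one_apply]
      rw [ENNReal.one_le_ofReal]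
      linarith [cos_nonpos_of_pi_div_two_le_of_le hu.1.le (by linarith [hu.2, pi_pos])]
    · simp [indicator, hu]
  rw [hkν_Ioc p _ _ (by linarith) (by positivity) (by linarith [pi_pos])] at h
  refine ne_of_gt (lt_of_lt_of_le ?_ h)
  rw [ENNReal.ofReal_pos]
  apply div_pos _ (by linarith)
  rw [sub_pos]
  exact rpow_lt_rpow_of_neg (by positivity) (by linarith [pi_pos]) (by linarith)

lemma hkKK_cos (p x : ℝ) (hp : 1 < p) : 
    ∫⁻ u, ENNReal.ofReal (1 - cos (u * x)) ∂(hkν p) = ENNReal.ofReal (|x| ^ p) * hkKK p := by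
  rcases eq_or_ne x 0 with rfl | hx
  · simp [zero_rpow (show p ≠ 0 by linarith)]
  · rw [hkKK, ← hkν_scale p |x| (abs_pos.2 hx) (fun u => ENNReal.ofReal (1 - cos u)) (by fun_prop)]
    congr 1; ext u
    rcases abs_choice x with h | h <;> rw [h]
    · rw [mul_comm]
    · rw [neg_mul, cos_neg, mul_comm]

open ProbabilityTheory

lemma hk_gauss_cos (u : ℝ) : ∫ x, cos (u * x) ∂(gaussianReal 0 1) = exp (-u^2/2) := by
  have h := charFun_gaussianReal (μ := 0) (v := 1) u
  rw [charFun_apply_real] at h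
  have h2 := congrArg Complex.re h
  have hi : Integrable (fun x : ℝ => Complex.exp (u * x * Complex.I)) (gaussianReal 0 1) := by
    apply Integrable.of_bound (C := 1) (by fun_prop)
    refine Filter.Eventually.of_forall (fun x => ?_)
    rw [← Complex.ofReal_mul, Complex.norm_exp_ofReal_mul_I]
  rw [← RCLike.re_eq_complex_re, ← integral_re hi] at h2
  have e : ∀ x : ℝ, RCLike.re (Complex.exp (u * x * Complex.I)) = cos (u * x) := by
    intro x
    rw [← Complex.ofReal_mul, RCLike.re_eq_complex_re, Complex.exp_ofReal_mul_I_re]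
  simp only [e] at h2
  rw [h2]
  simp only [Complex.ofReal_zero, mul_zero, zero_mul, zero_sub, NNReal.coe_one, Complex.ofReal_one, one_mul, RCLike.re_eq_complex_re]
  rw [← Complex.ofReal_re (exp (-u^2/2))]
  congr 1; push_cast; ring_nf

noncomputable def hkC (p : ℝ) : ℝ := 2 ^ (p/2) * Gamma ((p+1)/2) / √π

lemma hkC_pos (p : ℝ) (hp : 1 < p) : 0 < hkC p := by
  have : 0 < Gamma ((p+1)/2) := Gamma_pos_of_pos (by linarith)
  unfold hkC; positivity

lemma hk_gauss_mom (p : ℝ) (hp : 1 < p) : ∫ x, |x| ^ p ∂(gaussianReal 0 1) = hkC p := by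
  rw [integral_gaussianReal_eq_integral_smul (by norm_num)]
  have : ∀ x : ℝ, gaussianPDFReal 0 1 x • |x| ^ p = (fun y => (√(2 * π))⁻¹ * (y ^ p * exp (-(1/2) * y ^ (2:ℝ)))) |x| := by
    intro x
    simp only [gaussianPDFReal, NNReal.coe_one, mul_one, sub_zero, smul_eq_mul]
    rw [rpow_two, sq_abs, show -x^2/2 = -(1/2) * x^2 by ring]; ring
  simp only [this]
  rw [integral_comp_abs (f := fun y => (√(2 * π))⁻¹ * (y ^ p * exp (-(1/2) * y ^ (2:ℝ)))), integral_const_mul,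
    integral_rpow_mul_exp_neg_mul_rpow (by norm_num) (by linarith) (by norm_num), hkC]
  rw [show -(p+1)/2 = -((p+1)/2) by ring, rpow_neg (by norm_num), ← inv_rpow (by norm_num), 
    show ((1:ℝ)/2)⁻¹ = 2 by norm_num, sqrt_mul (by norm_num), add_div, rpow_add (by norm_num), ← sqrt_eq_rpow]
  have : √2 ≠ 0 := by positivity
  have : √π ≠ 0 := by positivity
  field_simp

lemma hk_gauss (p : ℝ) (hp : 1 < p) :
    ∫⁻ u, ENNReal.ofReal (1 - exp (-u^2/2)) ∂(hkν p) = ENNReal.ofReal (hkC p) * hkKK p := by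
  have e : ∀ u : ℝ, ENNReal.ofReal (1 - exp (-u^2/2)) = ∫⁻ x, ENNReal.ofReal (1 - cos (u * x)) ∂(gaussianReal 0 1) := by
    intro u
    have hi : Integrable (fun x : ℝ => cos (u * x)) (gaussianReal 0 1) := by
      apply Integrable.of_bound (C := 1) (by fun_prop)
      exact Filter.Eventually.of_forall (fun x => abs_cos_le_one _)
    rw [← ofReal_integral_eq_lintegral_ofReal (f := fun x => 1 - cos (u * x)) ((integrable_const 1).sub hi) 
      (Filter.Eventually.of_forall (fun x => by simpa using cos_le_one _)), integral_sub (integrable_const 1) hi,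
      hk_gauss_cos]
    simp
  simp only [e]
  have : SFinite (hkν p) := by unfold hkν; infer_instance
  rw [lintegral_lintegral_swap (by fun_prop)]
  simp only [hkKK_cos p _ hp]
  rw [lintegral_mul_const _ (by fun_prop), ← hk_gauss_mom p hp, ofReal_integral_eq_lintegral_ofReal]
  · apply Integrable.of_integral_ne_zero
    rw [hk_gauss_mom p hp]; exact (hkC_pos p hp).ne'
  · exact Filter.Eventually.of_forall (fun x => by positivity)

end part7

section part8
open Real Set MeasureTheory
open scoped ENNReal

/-- expectation over random signs of `g (x ± a₁ ± a₂ …)` -/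
noncomputable def hkE (g : ℝ → ℝ) : List ℝ → ℝ → ℝ
  | [], x => g x
  | a :: l, x => (hkE g l (x + a) + hkE g l (x - a)) / 2

lemma hkE_nonneg (g : ℝ → ℝ) (hg : ∀ x, 0 ≤ g x) (l : List ℝ) : ∀ x, 0 ≤ hkE g l x := by
  induction l with
  | nil => exact hg
  | cons a l ih => intro x; simp only [hkE]; linarith [ih (x + a), ih (x - a)]

lemma hkE_perm (g : ℝ → ℝ) {l l' : List ℝ} (h : l.Perm l') : ∀ x, hkE g l x = hkE g l' x := by
  induction h with
  | nil => intro x; rfl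
  | cons a _ ih => intro x; simp only [hkE, ih]
  | swap a b l => 
    intro x; simp only [hkE]
    rw [show x + b + a = x + a + b by ring, show x + b - a = x - a + b by ring,
      show x - b + a = x + a - b by ring, show x - b - a = x - a - b by ring]; ring
  | trans _ _ ih1 ih2 => intro x; rw [ih1, ih2]

lemma hkE_even (g : ℝ → ℝ) (hg : ∀ x, g (-x) = g x) (l : List ℝ) : ∀ x, hkE g l (-x) = hkE g l x := by
  induction l with
  | nil => exact hg
  | cons a l ih => 
    intro x; simp only [hkE]
    rw [show -x + a = -(x - a) by ring, show -x - a = -(x + a) by ring, ih, ih]; ring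

lemma hkE_cons_zero (g : ℝ → ℝ) (hg : ∀ x, g (-x) = g x) (l : List ℝ) (a : ℝ) :
    hkE g (a :: l) 0 = hkE g l a := by
  simp only [hkE]; rw [zero_add, zero_sub, hkE_even g hg]; ring

lemma hkE_pair (g : ℝ → ℝ) (l : List ℝ) (a b x : ℝ) :
    hkE g (a :: b :: l) x = (hkE g ((a + b) :: l) x + hkE g ((a - b) :: l) x) / 2 := by
  simp only [hkE]
  rw [show x + (a + b) = x + a + b by ring, show x - (a + b) = x - a - b by ring,
    show x + (a - b) = x + a - b by ring, show x - (a - b) = x - a + b by ring]; ring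

lemma hkE_scale (p c : ℝ) (l : List ℝ) : ∀ x,
    hkE (fun y => |y| ^ p) (l.map (c * ·)) (c * x) = |c| ^ p * hkE (fun y => |y| ^ p) l x := by
  induction l with
  | nil => intro x; simp only [List.map_nil, hkE]; rw [abs_mul, mul_rpow (abs_nonneg _) (abs_nonneg _)]
  | cons a l ih => 
    intro x; simp only [List.map_cons, hkE]
    rw [← mul_add, ← mul_sub, ih, ih]; ring

lemma hkE_cos (p : ℝ) (hp : 1 < p) (l : List ℝ) : ∀ x,
    ∫⁻ u, ENNReal.ofReal (1 - cos (u * x) * (l.map (fun a => cos (a * u))).prod) ∂(hkν p)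
     = ENNReal.ofReal (hkE (fun y => |y| ^ p) l x) * hkKK p := by
  induction l with
  | nil => intro x; simp only [List.map_nil, List.prod_nil, mul_one, hkE]; exact hkKK_cos p x hp
  | cons a l ih => 
    intro x
    simp only [List.map_cons, List.prod_cons, hkE]
    have nn := hkE_nonneg (fun y => |y| ^ p) (fun y => by positivity) l
    have bd : ∀ u x, 0 ≤ 1 - cos (u * x) * (l.map (fun a => cos (a * u))).prod := by
      intro u x
      have : |(l.map (fun a => cos (a * u))).prod| ≤ 1 := by
        clear ih nn
        induction l with
        | nil => simp
        | cons b l ih2 => 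
          simp only [List.map_cons, List.prod_cons, abs_mul]
          exact mul_le_one₀ (abs_cos_le_one _) (abs_nonneg _) ih2
      have h2 : |cos (u * x) * (l.map (fun a => cos (a * u))).prod| ≤ 1 := by
        rw [abs_mul]; exact mul_le_one₀ (abs_cos_le_one _) (abs_nonneg _) this
      linarith [le_abs_self (cos (u * x) * (l.map (fun a => cos (a * u))).prod)]
    have ms : Measurable (fun u => (l.map (fun a => cos (a * u))).prod) := by
      clear ih nn bd
      induction l with
      | nil => simp
      | cons b l ih2 => 
        simp only [List.map_cons, List.prod_cons]
        fun_prop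
    rw [add_div, ENNReal.ofReal_add (by linarith [nn (x + a)]) (by linarith [nn (x - a)]), 
      div_eq_mul_inv, div_eq_mul_inv, ENNReal.ofReal_mul (nn _), ENNReal.ofReal_mul (nn _), add_mul]
    rw [mul_right_comm, mul_right_comm _ _ (hkKK p), ← ih, ← ih, ← lintegral_mul_const _ (by fun_prop), ← lintegral_mul_const _ (by fun_prop), ← lintegral_add_left (by fun_prop)]
    congr 1; ext u
    rw [← ENNReal.ofReal_mul (bd _ _), ← ENNReal.ofReal_mul (bd _ _), ← ENNReal.ofReal_add (mul_nonneg (bd _ _) (by norm_num)) (mul_nonneg (bd _ _) (by norm_num))]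
    congr 1
    rw [mul_add, mul_sub, cos_add, cos_sub, mul_comm u a]; ring

lemma hk_amgm (l : List ℝ) (u : ℝ) (h : (l.map (· ^ 2)).sum = 1) :
    (l.map (fun a => cos (a * u))).prod ≤ (l.map (fun a => a ^ 2 * |cos (a * u)| ^ (1 / a ^ 2))).sum := by
  have := Real.geom_mean_le_arith_mean_weighted Finset.univ (fun i : Fin l.length => l[i.1] ^ 2) 
    (fun i => |cos (l[i.1] * u)| ^ (1 / l[i.1] ^ 2)) (fun i _ => sq_nonneg _) 
    (by rw [Fin.sum_univ_fun_getElem l (fun a => a ^ 2)]; exact h) (fun i _ => by positivity)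
  rw [Fin.prod_univ_fun_getElem l (fun a => (|cos (a * u)| ^ (1 / a ^ 2)) ^ (a ^ 2)), 
    Fin.sum_univ_fun_getElem l (fun a => a ^ 2 * (|cos (a * u)| ^ (1 / a ^ 2)))] at this
  refine le_trans (le_trans (le_abs_self _) ?_) this
  apply le_of_eq
  clear this h
  induction l with
  | nil => simp
  | cons a l ih =>
    simp only [List.map_cons, List.prod_cons, abs_mul, ih]
    congr 1
    rcases eq_or_ne a 0 with rfl | ha
    · simp
    · rw [← rpow_mul (abs_nonneg _), one_div_mul_cancel (by positivity), rpow_one]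

lemma hk_term (p a : ℝ) (hp : 3/2 ≤ p) (hp2 : p < 2) (hG : Gamma ((p+1)/2) ≤ √π / 2) (ha : a ^ 2 ≤ 1/2) (ha0 : a ≠ 0) :
    ENNReal.ofReal (hkC p) * hkKK p ≤ ∫⁻ u, ENNReal.ofReal (1 - |cos (a * u)| ^ (1 / a ^ 2)) ∂(hkν p) := by
  have hp1 : 1 < p := by linarith
  have hs : 2 ≤ 1 / a ^ 2 := by
    rw [le_div_iff₀ (by positivity)]; linarith
  have ex : ∀ s : ℝ, 0 < s → ∫⁻ u, ENNReal.ofReal (1 - exp (-u^2/2) ^ s) ∂(hkν p) = ENNReal.ofReal (s ^ (p/2)) * (ENNReal.ofReal (hkC p) * hkKK p) := by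
    intro s hs
    rw [← hk_gauss p hp1, show p/2 = (1/2) * p by ring, rpow_mul hs.le, ← sqrt_eq_rpow, ← hkν_scale p (√s) (by positivity) (fun u => ENNReal.ofReal (1 - exp (-u^2/2))) (by fun_prop)]
    congr 1; ext u; congr 2
    rw [mul_pow, sq_sqrt hs.le, ← exp_mul]; ring_nf
  have c2 : ∫⁻ u, ENNReal.ofReal (1 - |cos u| ^ (2:ℝ)) ∂(hkν p) = ENNReal.ofReal (2 ^ p / 2) * hkKK p := by
    have : ∀ u, ENNReal.ofReal (1 - |cos u| ^ (2:ℝ)) = ENNReal.ofReal (1 - cos (u * 2)) * ENNReal.ofReal (1/2) := by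
      intro u
      rw [← ENNReal.ofReal_mul (by linarith [cos_le_one (u * 2)]), rpow_two, sq_abs, mul_comm u 2, cos_two_mul]
      congr 1; ring
    simp only [this]
    rw [lintegral_mul_const _ (by fun_prop), hkKK_cos p 2 hp1, mul_right_comm, ← ENNReal.ofReal_mul (by positivity)]
    norm_num; ring_nf
  have hC := hkC_pos p hp1
  have F := hk_F p hp hp2.le (by
    rw [c2, ex 2 (by norm_num), ← mul_assoc, ← ENNReal.ofReal_mul (by positivity)]
    apply mul_le_mul_left
    apply ENNReal.ofReal_le_ofReal
    rw [hkC, ← mul_div_assoc, ← mul_assoc, ← rpow_add (by norm_num), add_halves, mul_div_assoc]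
    rw [div_eq_mul_inv (2 ^ p)]
    gcongr
    rw [div_le_iff₀ (by positivity)]; linarith) (by
    rw [c2]; have := hkKK_ne_top p hp1 hp2; finiteness) (1 / a^2) hs
  have sc := hkν_scale p |a| (abs_pos.2 ha0) (fun u => ENNReal.ofReal (1 - |cos u| ^ (1 / a ^ 2))) (by fun_prop)
  have e : ∀ u, |cos (|a| * u)| = |cos (a * u)| := by
    intro u
    rcases abs_choice a with h | h <;> rw [h]
    rw [neg_mul, cos_neg]
  simp only [e] at sc
  rw [sc]
  refine le_trans (le_of_eq ?_) (mul_le_mul_right F _)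
  rw [ex _ (by positivity), ← mul_assoc (ENNReal.ofReal (|a| ^ p)), ← ENNReal.ofReal_mul (by positivity)]
  have : |a| ^ p * (1 / a ^ 2) ^ (p / 2) = 1 := by
    rw [← sq_abs a, show p / 2 = (1/2) * p by ring, rpow_mul (by positivity), ← mul_rpow (by positivity) (by positivity), ← sqrt_eq_rpow, 
      sqrt_div (by norm_num), sqrt_sq (by positivity)]
    have := abs_pos.2 ha0
    field_simp; simp
  rw [this]; simp

lemma hk_direct (p : ℝ) (hp : 3/2 ≤ p) (hp2 : p < 2) (hG : Gamma ((p+1)/2) ≤ √π / 2) (l : List ℝ)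
    (h : (l.map (· ^ 2)).sum = 1) (hl : ∀ a ∈ l, a ^ 2 ≤ 1/2) :
    hkC p ≤ hkE (fun y => |y| ^ p) l 0 := by
  have hp1 : 1 < p := by linarith
  have hC := hkC_pos p hp1
  have E := hkE_cos p hp1 l 0
  have key : ∀ l : List ℝ, (∀ a ∈ l, a ^ 2 ≤ 1/2) → ENNReal.ofReal ((l.map (· ^ 2)).sum) * (ENNReal.ofReal (hkC p) * hkKK p) ≤
      ∫⁻ u, ENNReal.ofReal ((l.map (fun a => a ^ 2 * (1 - |cos (a * u)| ^ (1 / a ^ 2)))).sum) ∂(hkν p) := by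
    clear h hl E l
    intro l
    have nn : ∀ a u : ℝ, 0 ≤ a ^ 2 * (1 - |cos (a * u)| ^ (1 / a ^ 2)) := by
      intro a u
      apply mul_nonneg (sq_nonneg _)
      rw [sub_nonneg]
      exact rpow_le_one (abs_nonneg _) (abs_cos_le_one _) (by positivity)
    have nns : ∀ (l : List ℝ) (u : ℝ), 0 ≤ (l.map (fun a => a ^ 2 * (1 - |cos (a * u)| ^ (1 / a ^ 2)))).sum := by
      intro l u
      apply List.sum_nonneg
      simp only [List.mem_map]
      rintro _ ⟨a, _, rfl⟩
      exact nn a u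
    induction l with
    | nil => simp
    | cons a l ih => 
      intro hl
      simp only [List.map_cons, List.sum_cons]
      have : ∀ u, ENNReal.ofReal (a ^ 2 * (1 - |cos (a * u)| ^ (1 / a ^ 2)) + (l.map (fun a => a ^ 2 * (1 - |cos (a * u)| ^ (1 / a ^ 2)))).sum)
        = ENNReal.ofReal (a^2) * ENNReal.ofReal (1 - |cos (a * u)| ^ (1 / a ^ 2)) + ENNReal.ofReal ((l.map (fun a => a ^ 2 * (1 - |cos (a * u)| ^ (1 / a ^ 2)))).sum) := by
        intro u
        rw [ENNReal.ofReal_add (nn a u) (nns l u), ENNReal.ofReal_mul (sq_nonneg _)]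
      simp only [this]
      have s0 : 0 ≤ (l.map (· ^ 2)).sum := by
        apply List.sum_nonneg
        simp only [List.mem_map]
        rintro _ ⟨a, _, rfl⟩
        positivity
      rw [lintegral_add_left (by fun_prop), ENNReal.ofReal_add (sq_nonneg _) s0, add_mul, lintegral_const_mul _ (by fun_prop)]
      apply add_le_add _ (ih (fun a ha => hl a (List.mem_cons_of_mem _ ha)))
      rcases eq_or_ne a 0 with rfl | ha
      · simp
      · exact mul_le_mul_right (hk_term p a hp hp2 hG (hl a List.mem_cons_self) ha) _
  have k := key l hl
  rw [h, ENNReal.ofReal_one, one_mul] at k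
  have : ENNReal.ofReal (hkC p) * hkKK p ≤ ENNReal.ofReal (hkE (fun y => |y| ^ p) l 0) * hkKK p := by
    rw [← E]
    refine k.trans (lintegral_mono (fun u => ENNReal.ofReal_le_ofReal ?_))
    have am := hk_amgm l u h
    have sp : (l.map (fun a => a ^ 2 * (1 - |cos (a * u)| ^ (1 / a ^ 2)))).sum = (l.map (· ^ 2)).sum - (l.map (fun a => a ^ 2 * |cos (a * u)| ^ (1 / a ^ 2))).sum := by
      clear am k E h hl
      induction l with
      | nil => simp
      | cons a l ih => simp only [List.map_cons, List.sum_cons, ih]; ring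
    rw [sp, h, mul_zero, cos_zero, one_mul]
    linarith
  rw [ENNReal.mul_le_mul_iff_left (hkKK_ne_zero p hp1) (hkKK_ne_top p hp1 hp2)] at this
  rwa [ENNReal.ofReal_le_ofReal_iff (hkE_nonneg _ (fun y => by positivity) _ _)] at this

end part8

section part9
open Real Set MeasureTheory

lemma hk_m (a : ℝ) (h0 : 0 ≤ a) (h1 : a ≤ 1) :
    a * log (6 - 2 * a^2) ≤ (1 + a) * log (1 + a) - (1 - a) * log (1 - a) := by
  have hc : ConcaveOn ℝ (Icc 0 1) (fun a : ℝ => (1 + a) * log (1 + a) - (1 - a) * log (1 - a) - a * log (6 - 2 * a^2)) := by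
    apply concaveOn_of_hasDerivWithinAt2_nonpos (convex_Icc 0 1)
      (f' := fun x => 2 + log (1 + x) + log (1 - x) - log (6 - 2 * x^2) + 4 * x^2 / (6 - 2 * x^2))
      (f'' := fun x => 1 / (1 + x) - 1 / (1 - x) + 4 * x / (6 - 2 * x^2) + 48 * x / (6 - 2 * x^2)^2)
    · apply ContinuousOn.sub
      · apply ContinuousOn.sub
        · exact (continuous_mul_log.comp (continuous_const.add continuous_id)).continuousOn
        · exact (continuous_mul_log.comp (continuous_const.sub continuous_id)).continuousOn
      · apply continuousOn_id.mul
        apply ContinuousOn.log (by fun_prop)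
        intro x hx
        have := hx.1; have := hx.2
        nlinarith
    · intro x hx
      rw [interior_Icc] at hx
      have hx1 := hx.1; have hx2 := hx.2
      have n1 : 1 + x ≠ 0 := by linarith
      have n2 : 1 - x ≠ 0 := by linarith
      have n3 : 6 - 2 * x^2 ≠ 0 := by nlinarith
      have d1 : HasDerivAt (fun x : ℝ => 1 + x) 1 x := by simpa using (hasDerivAt_id x).const_add 1
      have d2 : HasDerivAt (fun x : ℝ => 1 - x) (-1) x := by simpa using (hasDerivAt_id x).const_sub 1
      have d3 : HasDerivAt (fun x : ℝ => 6 - 2 * x^2) (-(4 * x)) x := by 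
        exact (((hasDerivAt_pow 2 x).const_mul 2).const_sub 6).congr_deriv (by norm_num; ring)
      refine (((d1.mul (d1.log n1)).sub (d2.mul (d2.log n2))).sub ((hasDerivAt_id x).mul (d3.log n3))).congr_deriv ?_ |>.hasDerivWithinAt
      simp only [id]; field_simp; ring
    · intro x hx
      rw [interior_Icc] at hx
      have hx1 := hx.1; have hx2 := hx.2
      have n1 : 1 + x ≠ 0 := by linarith
      have n2 : 1 - x ≠ 0 := by linarith
      have n3 : 6 - 2 * x^2 ≠ 0 := by nlinarith
      have d1 : HasDerivAt (fun x : ℝ => 1 + x) 1 x := by simpa using (hasDerivAt_id x).const_add 1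
      have d2 : HasDerivAt (fun x : ℝ => 1 - x) (-1) x := by simpa using (hasDerivAt_id x).const_sub 1
      have d3 : HasDerivAt (fun x : ℝ => 6 - 2 * x^2) (-(4 * x)) x := by 
        exact (((hasDerivAt_pow 2 x).const_mul 2).const_sub 6).congr_deriv (by norm_num; ring)
      have d4 : HasDerivAt (fun x : ℝ => 4 * x^2) (8 * x) x := by 
        exact ((hasDerivAt_pow 2 x).const_mul 4).congr_deriv (by norm_num; ring)
      refine (((((d1.log n1).const_add 2).add (d2.log n2)).sub (d3.log n3)).add (d4.div d3 n3)).congr_deriv ?_ |>.hasDerivWithinAt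
      field_simp; ring
    · intro x hx
      rw [interior_Icc] at hx
      have hx1 := hx.1; have hx2 := hx.2
      have n1 : 0 < 1 + x := by linarith
      have n2 : 0 < 1 - x := by linarith
      have n3 : 0 < 3 - x^2 := by nlinarith
      have : 1 / (1 + x) - 1 / (1 - x) + 4 * x / (6 - 2 * x^2) + 48 * x / (6 - 2 * x^2)^2
        = - (8 * x^3) / ((1 + x) * (1 - x) * (3 - x^2)^2) := by
        rw [show 6 - 2 * x^2 = 2 * (3 - x^2) by ring]
        field_simp; ring
      rw [this]
      apply div_nonpos_of_nonpos_of_nonneg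
      · have : 0 ≤ x^3 := by positivity
        linarith
      · positivity
  have := hc.2 (show (0:ℝ) ∈ Icc 0 1 by simp) (show (1:ℝ) ∈ Icc 0 1 by simp) (show 0 ≤ 1 - a by linarith) h0 (by ring)
  simp only [smul_eq_mul, mul_zero, mul_one, zero_add] at this
  norm_num at this
  have l4 : log 4 = 2 * log 2 := by rw [show (4:ℝ) = 2^2 by norm_num, log_pow]; norm_num
  rw [l4] at this
  have e : (1+1:ℝ) = 2 := by norm_num
  try rw [e] at this
  linarith

lemma hk_logX (X r : ℝ) (hX : 0 < X) (hX1 : X < 1) (hr : 0 < r) (hr1 : r ≤ 1) :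
    log (1 - X ^ r) ≤ log (1 - X) + (r - 1) * (-X * log X / (1 - X)) := by
  have hm : MonotoneOn (fun r => log (1 - X ^ r) - (r - 1) * (-X * log X / (1 - X))) (Icc r 1) := by
    have lt : ∀ x ∈ Icc r 1, X ^ x < 1 := fun x hx => rpow_lt_one hX.le hX1 (by linarith [hx.1])
    have d : ∀ x ∈ Icc r 1, HasDerivAt (fun r => log (1 - X ^ r) - (r - 1) * (-X * log X / (1 - X)))
        ((-(X ^ x * log X)) / (1 - X ^ x) - (-X * log X / (1 - X))) x := by
      intro x hx
      have d1 : HasDerivAt (fun r => X ^ r) (X ^ x * log X) x := (hasStrictDerivAt_const_rpow hX x).hasDerivAt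
      exact (((d1.const_sub 1).log (by linarith [lt x hx])).sub (((hasDerivAt_id x).sub_const 1).mul_const _)).congr_deriv (by simp)
    apply monotoneOn_of_hasDerivWithinAt_nonneg (convex_Icc r 1) (fun x hx => (d x hx).continuousAt.continuousWithinAt)
      (fun x hx => (d x (interior_subset hx)).hasDerivWithinAt)
    intro x hx
    have hx := interior_subset hx
    have h1 := lt x hx
    have h2 : X ≤ X ^ x := by
      conv_lhs => rw [← rpow_one X]
      exact rpow_le_rpow_of_exponent_ge hX hX1.le hx.2
    have hl : log X < 0 := log_neg hX hX1
    rw [sub_nonneg, div_le_div_iff₀ (by linarith) (by linarith)]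
    nlinarith [mul_nonneg (neg_nonneg.2 hl.le) (sub_nonneg.2 h2)]
  have := hm ⟨le_rfl, hr1⟩ ⟨hr1, le_rfl⟩ hr1
  simp only [rpow_one] at this
  linarith

lemma hk_slope (a r : ℝ) (h0 : 0 < a) (h1 : a < 1) (hr : 0 < r) (hr1 : r ≤ 1) :
    (1 + a) ^ r - (1 - a) ^ r ≤ 2 * a * (6 - 2 * a^2) ^ ((r - 1) / 2) := by
  have u0 : 0 < 1 + a := by linarith
  have w0 : 0 < 1 - a := by linarith
  have hX1 : (1 - a) / (1 + a) < 1 := by rw [div_lt_one u0]; linarith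
  have hX := div_pos w0 u0
  have e1 : (1 + a) ^ r - (1 - a) ^ r = (1 + a) ^ r * (1 - ((1 - a) / (1 + a)) ^ r) := by
    rw [div_rpow w0.le u0.le]; field_simp
  have h3 : 0 < 1 - ((1 - a) / (1 + a)) ^ r := by linarith [rpow_lt_one hX.le hX1 hr]
  have h6 : 0 < 6 - 2 * a^2 := by nlinarith
  rw [e1, ← log_le_log_iff (by positivity) (by positivity), log_mul (by positivity) (by positivity),
    log_mul (by positivity) (by positivity), log_rpow u0, log_rpow h6]
  have hL := hk_logX _ r hX hX1 hr hr1
  rw [show 1 - (1 - a) / (1 + a) = 2 * a / (1 + a) by field_simp; ring, log_div w0.ne' u0.ne', log_div (by positivity) u0.ne'] at hL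
  have e2 : -((1 - a) / (1 + a)) * (log (1 - a) - log (1 + a)) / (2 * a / (1 + a)) = 
    ((1 + a) * log (1 + a) - (1 - a) * log (1 - a)) / (2 * a) - log (1 + a) := by
    field_simp; ring
  rw [e2] at hL
  have hm := hk_m a h0.le h1.le
  have hm2 : log (6 - 2 * a^2) / 2 ≤ ((1 + a) * log (1 + a) - (1 - a) * log (1 - a)) / (2 * a) := by
    rw [div_le_div_iff₀ (by norm_num) (by positivity)]; linarith
  nlinarith [mul_le_mul_of_nonneg_left hm2 (sub_nonneg.2 hr1)]

lemma hk_base (a p : ℝ) (h0 : 0 ≤ a) (h1 : a ≤ 1) (hp : 1 < p) (hp2 : p ≤ 2) :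
    2 ^ (p + 1) ≤ (1 + a) ^ p + (1 - a) ^ p + (6 - 2 * a^2) ^ (p / 2) := by
  have ha : AntitoneOn (fun a : ℝ => (1 + a) ^ p + (1 - a) ^ p + (6 - 2 * a^2) ^ (p / 2)) (Icc 0 1) := by
    have d : ∀ x ∈ Icc (0:ℝ) 1, HasDerivAt (fun a : ℝ => (1 + a) ^ p + (1 - a) ^ p + (6 - 2 * a^2) ^ (p / 2))
        (1 * p * (1 + x) ^ (p - 1) + (-1) * p * (1 - x) ^ (p - 1) + (-(4 * x)) * (p/2) * (6 - 2 * x^2) ^ (p / 2 - 1)) x := by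
      intro x hx
      have hx1 := hx.1; have hx2 := hx.2
      have n3 : 6 - 2 * x^2 ≠ 0 := by nlinarith
      have d1 : HasDerivAt (fun x : ℝ => 1 + x) 1 x := by simpa using (hasDerivAt_id x).const_add 1
      have d2 : HasDerivAt (fun x : ℝ => 1 - x) (-1) x := by simpa using (hasDerivAt_id x).const_sub 1
      have d3 : HasDerivAt (fun x : ℝ => 6 - 2 * x^2) (-(4 * x)) x := by 
        exact (((hasDerivAt_pow 2 x).const_mul 2).const_sub 6).congr_deriv (by norm_num; ring)
      exact ((d1.rpow_const (Or.inr hp.le)).add (d2.rpow_const (Or.inr hp.le))).add (d3.rpow_const (Or.inl n3))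
    apply antitoneOn_of_hasDerivWithinAt_nonpos (convex_Icc 0 1) (fun x hx => (d x hx).continuousAt.continuousWithinAt)
      (fun x hx => (d x (interior_subset hx)).hasDerivWithinAt)
    intro x hx
    rw [interior_Icc] at hx
    have := hk_slope x (p - 1) hx.1 hx.2 (by linarith) (by linarith)
    rw [show (p - 1 - 1) / 2 = p / 2 - 1 by ring] at this
    have : p * ((1 + x) ^ (p - 1) - (1 - x) ^ (p - 1)) ≤ p * (2 * x * (6 - 2 * x^2) ^ (p / 2 - 1)) := by gcongr
    linarith
  have := ha ⟨h0, h1⟩ ⟨zero_le_one, le_rfl⟩ h1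
  simp only at this
  refine le_trans (le_of_eq ?_) this
  rw [sub_self, zero_rpow (by linarith), show (6 - 2 * 1 ^ 2 : ℝ) = 2 ^ (2:ℝ) by norm_num, ← rpow_mul (by norm_num), 
    show 2 * (p/2) = p by ring, show (1:ℝ)+1 = 2 by norm_num, rpow_add (by norm_num), rpow_one]
  ring

end part9

section part10
open Real Set MeasureTheory

noncomputable def hkφ (q x : ℝ) : ℝ := if 1 ≤ x then (1 + x) ^ q else 2 * 2 ^ q - (3 - x) ^ q

lemma hkφ_ge (q x : ℝ) (hq : 0 ≤ q) (hq1 : q ≤ 1) (hx : 0 ≤ x) : (1 + x) ^ q ≤ hkφ q x := by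
  unfold hkφ
  split_ifs with h
  · exact le_rfl
  · push Not at h
    have := (concaveOn_rpow hq hq1).2 (show 1 + x ∈ Ici 0 by simp; linarith) (show 3 - x ∈ Ici 0 by simp; linarith)
      (show (0:ℝ) ≤ 1/2 by norm_num) (show (0:ℝ) ≤ 1/2 by norm_num) (by norm_num)
    simp only [smul_eq_mul] at this
    rw [show 1 / 2 * (1 + x) + 1 / 2 * (3 - x) = 2 by ring] at this
    linarith

lemma hk_chord (q M t : ℝ) (hq : 0 ≤ q) (hq1 : q ≤ 1) (hM : 2 < M) (h2 : 2 ≤ t) (ht : t ≤ M) :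
    2 ^ q + (t - 2) * ((M ^ q - 2 ^ q) / (M - 2)) ≤ t ^ q := by
  have hm : 0 < M - 2 := by linarith
  have := (concaveOn_rpow hq hq1).2 (show (2:ℝ) ∈ Ici 0 by simp) (show M ∈ Ici 0 by simp; linarith)
      (show 0 ≤ 1 - (t - 2) / (M - 2) by rw [sub_nonneg, div_le_one hm]; linarith) 
      (show 0 ≤ (t - 2) / (M - 2) from div_nonneg (by linarith) hm.le) (by ring)
  simp only [smul_eq_mul] at this
  rw [show (1 - (t - 2) / (M - 2)) * 2 + (t - 2) / (M - 2) * M = t by field_simp; ring] at this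
  refine le_trans (le_of_eq ?_) this
  field_simp; ring

lemma hkφ_mid (q x y : ℝ) (hq : 0 ≤ q) (hq1 : q ≤ 1) (hx : 0 ≤ x) (hy : 0 ≤ y) (hxy : x + y < 2) :
    hkφ q ((x + y) / 2) ≤ (hkφ q x + hkφ q y) / 2 := by
  wlog h : x ≤ y generalizing x y
  · have := this y x hy hx (by linarith) (by linarith)
    rw [add_comm x y, add_comm (hkφ q x)]; exact this
  have hx1 : ¬ 1 ≤ x := by linarith
  have hz1 : ¬ 1 ≤ (x + y) / 2 := by linarith
  unfold hkφ
  rw [if_neg hx1, if_neg hz1]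
  split_ifs with hy1
  · have c1 := hk_chord q (3 - x) (3 - (x + y) / 2) hq hq1 (by linarith) (by linarith) (by linarith)
    have c2 := hk_chord q (3 - x) (1 + y) hq hq1 (by linarith) (by linarith) (by linarith)
    have e : (3 - x - 2) * (((3 - x) ^ q - 2 ^ q) / (3 - x - 2)) = (3 - x) ^ q - 2 ^ q := by
      rw [mul_div_cancel₀]; linarith
    nlinarith
  · push Not at hy1
    have := (concaveOn_rpow hq hq1).2 (show 3 - x ∈ Ici 0 by simp; linarith) (show 3 - y ∈ Ici 0 by simp; linarith)
      (show (0:ℝ) ≤ 1/2 by norm_num) (show (0:ℝ) ≤ 1/2 by norm_num) (by norm_num)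
    simp only [smul_eq_mul] at this
    rw [show 1 / 2 * (3 - x) + 1 / 2 * (3 - y) = 3 - (x + y) / 2 by ring] at this
    linarith

lemma hkφ_base (p a C : ℝ) (hp : 1 < p) (hp2 : p ≤ 2) (hC : C ≤ 2 ^ (p / 2 - 1)) (ha : a ^ 2 < 1) :
    C * hkφ (p / 2) (a ^ 2) ≤ (|1 + a| ^ p + |1 - a| ^ p) / 2 := by
  have e : |1 + a| ^ p + |1 - a| ^ p = (1 + |a|) ^ p + (1 - |a|) ^ p := by
    have h := abs_lt.1 <| abs_lt_of_sq_lt_sq (show a ^ 2 < 1 ^ 2 by linarith) (by norm_num)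
    rw [abs_of_pos (show 0 < 1 + a by linarith [h.1]), abs_of_pos (show 0 < 1 - a by linarith [h.2])]
    rcases abs_choice a with h | h <;> rw [h]
    rw [sub_neg_eq_add, ← sub_eq_add_neg, add_comm]
  have h1 : |a| ≤ 1 := by rw [← sq_le_one_iff_abs_le_one]; exact ha.le
  have b := hk_base |a| p (abs_nonneg _) h1 hp hp2
  rw [sq_abs] at b
  rw [e, hkφ, if_neg (by linarith)]
  have nn : 0 ≤ 2 * 2 ^ (p / 2) - (3 - a ^ 2) ^ (p / 2) := by
    have h4 : (3 - a ^ 2) ^ (p / 2) ≤ 4 ^ (p / 2) := by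
      apply rpow_le_rpow (by linarith) (by nlinarith [sq_nonneg a]) (by linarith)
    have h5 : (4:ℝ) ^ (p / 2) ≤ 2 * 2 ^ (p / 2) := by
      rw [show (4:ℝ) = 2 ^ (2:ℝ) by norm_num, ← rpow_mul (by norm_num), ← rpow_one_add' (by norm_num) (by linarith)]
      apply rpow_le_rpow_of_exponent_le (by norm_num) (by linarith)
    linarith
  refine (mul_le_mul_of_nonneg_right hC nn).trans ?_
  have e2 : (6 - 2 * a ^ 2) ^ (p / 2) = 2 ^ (p / 2) * (3 - a ^ 2) ^ (p / 2) := by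
    rw [← mul_rpow (by norm_num) (by linarith)]; ring_nf
  have e3 : (2:ℝ) ^ (p + 1) = 2 * (2 ^ (p / 2) * 2 ^ (p / 2)) := by
    rw [← rpow_add (by norm_num), add_halves, rpow_add (by norm_num), rpow_one]; ring
  rw [e2, e3] at b
  rw [rpow_sub (by norm_num), rpow_one]
  linarith

lemma hk_sum_nonneg (l : List ℝ) : 0 ≤ (l.map (· ^ 2)).sum := by
  apply List.sum_nonneg
  simp only [List.mem_map]
  rintro _ ⟨a, _, rfl⟩
  positivity

lemma hk_sum_scale (c : ℝ) (l : List ℝ) : ((l.map (c * ·)).map (· ^ 2)).sum = c ^ 2 * (l.map (· ^ 2)).sum := by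
  induction l with
  | nil => simp
  | cons a l ih => simp only [List.map_cons, List.sum_cons, ih]; ring

lemma hk_sum_perm {l l' : List ℝ} (h : l.Perm l') : (l.map (· ^ 2)).sum = (l'.map (· ^ 2)).sum := 
  (h.map _).sum_eq

/-- homogeneous version of the direct estimate -/
lemma hk_direct' (p : ℝ) (hp : 3/2 ≤ p) (hp2 : p < 2) (hG : Gamma ((p+1)/2) ≤ √π / 2) (l : List ℝ) (V : ℝ) (hV : 0 < V)
    (h : (l.map (· ^ 2)).sum = V) (hl : ∀ a ∈ l, a ^ 2 ≤ V/2) :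
    hkC p * V ^ (p/2) ≤ hkE (fun y => |y| ^ p) l 0 := by
  have hs : 0 < √V := sqrt_pos.2 hV
  have e : (1 / √V) ^ 2 = 1 / V := by rw [div_pow, sq_sqrt hV.le, one_pow]
  have := hk_direct p hp hp2 hG (l.map ((1/√V) * ·)) (by rw [hk_sum_scale, h, e]; field_simp) (by
    intro a ha
    simp only [List.mem_map] at ha
    obtain ⟨b, hb, rfl⟩ := ha
    rw [mul_pow, e]
    have := hl b hb
    rw [one_div, inv_mul_le_iff₀ hV]; linarith)
  rw [← mul_zero (1/√V), hkE_scale, abs_of_pos (by positivity), one_div, inv_rpow hs.le, sqrt_eq_rpow, ← rpow_mul hV.le,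
    show 1/2 * p = p/2 by ring, le_inv_mul_iff₀ (by positivity)] at this
  linarith

lemma hk_induct (p : ℝ) (hp : 3/2 ≤ p) (hp2 : p < 2) (hG : Gamma ((p+1)/2) ≤ √π / 2) (n : ℕ) :
    ∀ l : List ℝ, l.length = n → hkC p * hkφ (p/2) ((l.map (· ^ 2)).sum) ≤ hkE (fun y => |y| ^ p) l 1 := by
  have hC0 := hkC_pos p (by linarith)
  have hC : hkC p ≤ 2 ^ (p / 2 - 1) := by
    rw [hkC, rpow_sub (by norm_num), rpow_one, div_le_div_iff₀ (by positivity) (by norm_num)]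
    have : (0:ℝ) < 2 ^ (p / 2) := by positivity
    nlinarith
  have ev : ∀ x : ℝ, |(-x)| ^ p = |x| ^ p := fun x => by rw [abs_neg]
  induction n with
  | zero =>
    intro l hl
    obtain rfl := List.length_eq_zero_iff.1 hl
    have := hkφ_base p 0 (hkC p) (by linarith) hp2.le hC (by norm_num)
    simp only [List.map_nil, List.sum_nil, hkE]
    norm_num at this ⊢
    exact this
  | succ n ih =>
    have first : ∀ l : List ℝ, l.length = n + 1 → (l.map (· ^ 2)).sum < 1 → 
        hkC p * hkφ (p/2) ((l.map (· ^ 2)).sum) ≤ hkE (fun y => |y| ^ p) l 1 := by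
      intro l hl hs
      match l, hl, hs with
      | [a], hl, hs =>
        simp only [List.map_cons, List.map_nil, List.sum_cons, List.sum_nil, add_zero, hkE] at hs ⊢
        exact hkφ_base p a (hkC p) (by linarith) hp2.le hC hs
      | a :: b :: l, hl, hs =>
        rw [hkE_pair]
        have h1 := ih ((a + b) :: l) (by simp at hl ⊢; omega)
        have h2 := ih ((a - b) :: l) (by simp at hl ⊢; omega)
        simp only [List.map_cons, List.sum_cons] at h1 h2 hs ⊢
        have nn := hk_sum_nonneg l
        have m := hkφ_mid (p/2) ((a + b)^2 + (l.map (· ^ 2)).sum) ((a - b)^2 + (l.map (· ^ 2)).sum) (by linarith) (by linarith)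
          (by positivity) (by positivity) (by nlinarith)
        rw [show ((a + b)^2 + (l.map (· ^ 2)).sum + ((a - b)^2 + (l.map (· ^ 2)).sum)) / 2 = a^2 + (b^2 + (l.map (· ^ 2)).sum) by ring] at m
        have := mul_le_mul_of_nonneg_left m hC0.le
        linarith
    intro l hl
    rcases lt_or_ge ((l.map (· ^ 2)).sum) 1 with hs | hs
    · exact first l hl hs
    · rw [hkφ, if_pos hs, ← hkE_cons_zero _ ev]
      by_cases hall : ∀ a ∈ (1 :: l), a ^ 2 ≤ (1 + (l.map (· ^ 2)).sum) / 2
      · exact hk_direct' p hp hp2 hG (1 :: l) _ (by linarith) (by simp) hall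
      · push Not at hall
        obtain ⟨a, ha, hbig⟩ := hall
        have hal : a ∈ l := by
          rcases List.mem_cons.1 ha with rfl | h
          · linarith
          · exact h
        have ha0 : a ≠ 0 := by rintro rfl; linarith
        have pm := List.perm_cons_erase hal
        set l' := l.erase a with hl'
        rw [hkE_perm _ ((pm.cons 1).trans (List.Perm.swap a 1 l')), hkE_cons_zero _ ev]
        rw [hk_sum_perm pm] at hbig ⊢
        simp only [List.map_cons, List.sum_cons] at hbig ⊢
        have hlen : l'.length = n := by rw [pm.length_eq] at hl; simpa using hl
        have nn := hk_sum_nonneg l'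
        have a2 : 0 < a^2 := by positivity
        have hsum : (((1 :: l').map (a⁻¹ * ·)).map (· ^ 2)).sum = (1 + (l'.map (· ^ 2)).sum) / a^2 := by
          rw [hk_sum_scale]; simp only [List.map_cons, List.sum_cons]; field_simp
        have F := first ((1 :: l').map (a⁻¹ * ·)) (by simp [hlen]) (by
          rw [hsum, div_lt_one a2]; linarith)
        rw [hsum] at F
        have g := hkφ_ge (p/2) ((1 + (l'.map (· ^ 2)).sum) / a^2) (by linarith) (by linarith) (by positivity)
        have sc := hkE_scale p a ((1 :: l').map (a⁻¹ * ·)) 1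
        rw [mul_one, List.map_map, show ((a * ·) ∘ (a⁻¹ * ·)) = (id : ℝ → ℝ) by ext x; simp [ha0], List.map_id] at sc
        rw [sc]
        have G := (mul_le_mul_of_nonneg_left g hC0.le).trans F
        have H := mul_le_mul_of_nonneg_left G (show 0 ≤ |a| ^ p by positivity)
        refine le_trans (le_of_eq ?_) H
        have : |a| ^ p = (a ^ 2) ^ (p / 2) := by
          rw [← sq_abs, ← rpow_two, ← rpow_mul (abs_nonneg _)]; ring_nf
        rw [this, mul_left_comm, ← mul_rpow (by positivity) (by positivity)]
        congr 2
        field_simp; ring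

/-- Khintchine with the Haagerup constant in the range where the Gaussian constant is the smaller one -/
lemma hk_khin1 (p : ℝ) (hp : 3/2 ≤ p) (hp2 : p < 2) (hG : Gamma ((p+1)/2) ≤ √π / 2) (l : List ℝ) :
    hkC p * ((l.map (· ^ 2)).sum) ^ (p/2) ≤ hkE (fun y => |y| ^ p) l 0 := by
  have hC0 := hkC_pos p (by linarith)
  have ev : ∀ x : ℝ, |(-x)| ^ p = |x| ^ p := fun x => by rw [abs_neg]
  by_cases h : ∃ a ∈ l, a ≠ 0
  · obtain ⟨a, ha, ha0⟩ := h
    have pm := List.perm_cons_erase ha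
    set l' := l.erase a with hl'
    rw [hkE_perm _ pm, hkE_cons_zero _ ev, hk_sum_perm pm]
    simp only [List.map_cons, List.sum_cons]
    have nn := hk_sum_nonneg l'
    have F := hk_induct p hp hp2 hG _ (l'.map (a⁻¹ * ·)) rfl
    rw [hk_sum_scale] at F
    have g := hkφ_ge (p/2) (a⁻¹ ^ 2 * (l'.map (· ^ 2)).sum) (by linarith) (by linarith) (by positivity)
    have sc := hkE_scale p a (l'.map (a⁻¹ * ·)) 1
    rw [mul_one, List.map_map, show ((a * ·) ∘ (a⁻¹ * ·)) = (id : ℝ → ℝ) by ext x; simp [ha0], List.map_id] at sc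
    rw [sc]
    have G := (mul_le_mul_of_nonneg_left g hC0.le).trans F
    have H := mul_le_mul_of_nonneg_left G (show 0 ≤ |a| ^ p by positivity)
    refine le_trans (le_of_eq ?_) H
    have : |a| ^ p = (a ^ 2) ^ (p / 2) := by
      rw [← sq_abs, ← rpow_two, ← rpow_mul (abs_nonneg _)]; ring_nf
    rw [this, mul_left_comm, ← mul_rpow (by positivity) (by positivity)]
    congr 2
    field_simp
  · push Not at h
    have : (l.map (· ^ 2)).sum = 0 := by
      apply List.sum_eq_zero
      simp only [List.mem_map]
      rintro _ ⟨a, ha, rfl⟩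
      rw [h a ha]; norm_num
    rw [this, zero_rpow (by linarith), mul_zero]
    exact hkE_nonneg _ (fun y => by positivity) _ _

end part10

section part11
open Real Set MeasureTheory

lemma hk_gamma_three_half : Gamma (3/2) = √π / 2 := by
  rw [show (3:ℝ)/2 = 1/2 + 1 by norm_num, Gamma_add_one (by norm_num), Gamma_one_half_eq]; ring

lemma hk_gamma_deriv : ∃ d, 0 < d ∧ HasDerivAt Gamma d (3/2) := by
  refine ⟨√π * (1 - (eulerMascheroniConstant + 2 * log 2) / 2), ?_, ?_⟩
  · apply mul_pos (by positivity)
    have h := eulerMascheroniConstant_lt_eulerMascheroniSeq' 16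
    rw [eulerMascheroniSeq', if_neg (by norm_num)] at h
    have e : log ((16 : ℕ) : ℝ) = 4 * log 2 := by
      rw [show ((16 : ℕ) : ℝ) = 2 ^ 4 by norm_num, log_pow]; norm_num
    rw [e] at h
    have h16 : ((harmonic 16 : ℚ) : ℝ) = 2436559 / 720720 := by
      have : harmonic 16 = 2436559 / 720720 := by
        simp only [harmonic, Finset.sum_range_succ, Finset.sum_range_zero]; norm_num
      rw [this]; norm_num
    rw [h16] at h
    have := log_two_gt_d9
    linarith
  · have h1 : HasDerivAt (fun x : ℝ => (x - 1) * Gamma (x - 1)) (√π * (1 - (eulerMascheroniConstant + 2 * log 2) / 2)) (3/2) := by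
      have d0 : HasDerivAt (fun x : ℝ => x - 1) 1 (3/2) := (hasDerivAt_id _).sub_const 1
      have d1 : HasDerivAt (fun x : ℝ => Gamma (x - 1)) (-√π * (eulerMascheroniConstant + 2 * log 2)) (3/2) := by
        have hh : HasDerivAt Gamma (-√π * (eulerMascheroniConstant + 2 * log 2)) ((3/2 : ℝ) - 1) := by
          rw [show (3/2 : ℝ) - 1 = 1/2 by norm_num]; exact Real.hasDerivAt_Gamma_one_half
        exact (HasDerivAt.comp (h := fun x : ℝ => x - 1) (h₂ := Gamma) (3/2 : ℝ) hh d0).congr_deriv (by ring)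
      refine (d0.mul d1).congr_deriv ?_
      rw [show (3/2 : ℝ) - 1 = 1/2 by norm_num, Gamma_one_half_eq]; ring
    apply h1.congr_of_eventuallyEq
    filter_upwards [isOpen_Ioi.mem_nhds (show (3/2:ℝ) ∈ Ioi 1 by norm_num [mem_Ioi])] with x hx
    have hx : 1 < x := hx
    rw [← Gamma_add_one (by linarith), sub_add_cancel]

lemma hk_gamma_five_quarter : √π / 2 ≤ Gamma (5/4) := by
  have hG : 0 < Gamma (5/4) := Gamma_pos_of_pos (by norm_num)
  have h := Real.Gamma_mul_add_mul_le_rpow_Gamma_mul_rpow_Gamma (s := 21/4) (t := 6) (a := 2/3) (b := 1/3) (by norm_num) (by norm_num) (by norm_num) (by norm_num) (by norm_num)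
  have e1 : Gamma (21/4) = 9945/256 * Gamma (5/4) := by
    rw [show (21/4:ℝ) = 17/4 + 1 by norm_num, Gamma_add_one (by norm_num), show (17/4:ℝ) = 13/4 + 1 by norm_num, Gamma_add_one (by norm_num),
      show (13/4:ℝ) = 9/4 + 1 by norm_num, Gamma_add_one (by norm_num), show (9/4:ℝ) = 5/4 + 1 by norm_num, Gamma_add_one (by norm_num)]
    ring
  have e2 : Gamma (11/2) = 945/16 * (√π / 2) := by
    rw [show (11/2:ℝ) = 9/2 + 1 by norm_num, Gamma_add_one (by norm_num), show (9/2:ℝ) = 7/2 + 1 by norm_num, Gamma_add_one (by norm_num),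
      show (7/2:ℝ) = 5/2 + 1 by norm_num, Gamma_add_one (by norm_num), show (5/2:ℝ) = 3/2 + 1 by norm_num, Gamma_add_one (by norm_num), hk_gamma_three_half]
    ring
  have e3 : Gamma 6 = 120 := by
    rw [show (6:ℝ) = ((5:ℕ):ℝ) + 1 by norm_num, Gamma_nat_eq_factorial]
    norm_num [Nat.factorial]
  rw [show (2/3 * (21/4) + 1/3 * 6 : ℝ) = 11/2 by norm_num, e1, e2, e3] at h
  have h3 := pow_le_pow_left₀ (by positivity) h 3
  rw [mul_pow (( 9945/256 * Gamma (5/4)) ^ (2/3 : ℝ)), ← rpow_mul_natCast (by positivity), ← rpow_mul_natCast (by norm_num)] at h3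
  norm_num at h3
  by_contra hlt
  push Not at hlt
  set g := √π / 2 with hg
  have g0 : 0.88 < g := by
    rw [hg, lt_div_iff₀ (by norm_num)]
    apply lt_sqrt_of_sq_lt
    linarith [pi_gt_d2]
  have h4 : Gamma (5/4) ^ 2 ≤ g ^ 2 := pow_le_pow_left₀ hG.le hlt.le 2
  have g2 : 0 < g ^ 2 := by positivity
  rw [mul_pow, mul_pow] at h3
  norm_num at h3
  nlinarith

lemma hk_exists (p0 : ℝ) (h1 : 3/2 ≤ p0) (h2 : p0 < 2) (h : √π / 2 ≤ Gamma ((p0 + 1) / 2)) :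
    ∃ p', p0 ≤ p' ∧ p' < 2 ∧ Gamma ((p' + 1) / 2) = √π / 2 := by
  obtain ⟨d, hd, hder⟩ := hk_gamma_deriv
  have dg : HasDerivAt (fun p : ℝ => Gamma ((p + 1) / 2)) (d * (1/2)) 2 := by
    have d0 : HasDerivAt (fun p : ℝ => (p + 1) / 2) (1/2) 2 := ((hasDerivAt_id (2:ℝ)).add_const 1).div_const 2
    have hh : HasDerivAt Gamma d (((2:ℝ) + 1) / 2) := by rw [show ((2:ℝ) + 1) / 2 = 3/2 by norm_num]; exact hder
    exact HasDerivAt.comp (h := fun p : ℝ => (p + 1) / 2) (h₂ := Gamma) (2 : ℝ) hh d0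
  have hlt : ∃ p1, p0 < p1 ∧ p1 < 2 ∧ Gamma ((p1 + 1) / 2) < √π / 2 := by
    have ht := (hasDerivAt_iff_tendsto_slope.1 dg)
    have ev := ht.eventually (lt_mem_nhds (show 0 < d * (1/2) by positivity))
    have ev2 : ∀ᶠ x in nhdsWithin (2:ℝ) (Iio 2), 0 < slope (fun p : ℝ => Gamma ((p + 1) / 2)) 2 x := 
      ev.filter_mono (nhdsWithin_mono _ (fun x hx => ne_of_lt hx))
    have ev3 : ∀ᶠ x in nhdsWithin (2:ℝ) (Iio 2), x ∈ Ioo p0 2 := Ioo_mem_nhdsLT h2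
    obtain ⟨x, hx, hx2⟩ := (ev2.and ev3).exists
    refine ⟨x, hx2.1, hx2.2, ?_⟩
    rw [slope_def_field] at hx
    have hn : x - 2 < 0 := by linarith [hx2.2]
    rw [div_pos_iff] at hx
    rcases hx with hx | hx
    · linarith [hx.2]
    · have := hx.1
      rw [show ((2:ℝ) + 1) / 2 = 3/2 by norm_num, hk_gamma_three_half] at this
      linarith
  obtain ⟨p1, q1, q2, q3⟩ := hlt
  have hc : ContinuousOn (fun p : ℝ => Gamma ((p + 1) / 2)) (Icc p0 p1) := by
    intro x hx
    apply ContinuousAt.continuousWithinAt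
    have : ContinuousAt Gamma ((x + 1) / 2) := by
      apply (differentiableAt_Gamma _).continuousAt
      intro m
      have : (0:ℝ) ≤ m := by positivity
      have := hx.1
      linarith
    exact ContinuousAt.comp (f := fun p : ℝ => (p + 1) / 2) this (by fun_prop)
  obtain ⟨p', hp', e⟩ := intermediate_value_Icc' q1.le hc ⟨q3.le, h⟩
  exact ⟨p', hp'.1, by linarith [hp'.2], e⟩

lemma hk_two_holder (θ x1 x2 y1 y2 : ℝ) (h0 : 0 < θ) (h1 : θ < 1) (hx1 : 0 ≤ x1) (hx2 : 0 ≤ x2) (hy1 : 0 ≤ y1) (hy2 : 0 ≤ y2) :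
    x1 ^ θ * y1 ^ (1 - θ) + x2 ^ θ * y2 ^ (1 - θ) ≤ (x1 + x2) ^ θ * (y1 + y2) ^ (1 - θ) := by
  rcases eq_or_lt_of_le (add_nonneg hx1 hx2) with hX | hX
  · have a1 : x1 = 0 := by linarith
    have a2 : x2 = 0 := by linarith
    simp [a1, a2, zero_rpow h0.ne']
  rcases eq_or_lt_of_le (add_nonneg hy1 hy2) with hY | hY
  · have a1 : y1 = 0 := by linarith
    have a2 : y2 = 0 := by linarith
    have : 1 - θ ≠ 0 := by linarith
    simp [a1, a2, zero_rpow this]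
  have g1 := Real.geom_mean_le_arith_mean2_weighted h0.le (show 0 ≤ 1 - θ by linarith) (div_nonneg hx1 hX.le) (div_nonneg hy1 hY.le) (by ring)
  have g2 := Real.geom_mean_le_arith_mean2_weighted h0.le (show 0 ≤ 1 - θ by linarith) (div_nonneg hx2 hX.le) (div_nonneg hy2 hY.le) (by ring)
  rw [div_rpow hx1 hX.le, div_rpow hy1 hY.le] at g1
  rw [div_rpow hx2 hX.le, div_rpow hy2 hY.le] at g2
  have s : θ * (x1 / (x1 + x2)) + (1 - θ) * (y1 / (y1 + y2)) + (θ * (x2 / (x1 + x2)) + (1 - θ) * (y2 / (y1 + y2))) = 1 := by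
    field_simp; ring
  have t := (add_le_add g1 g2).trans s.le
  rw [div_mul_div_comm, div_mul_div_comm, ← add_div, div_le_one (by positivity)] at t
  exact t

lemma hkE_holder (θ p p' : ℝ) (h0 : 0 < θ) (h1 : θ < 1) (hp : 0 < p) (e : p' = θ * p + (1 - θ) * 2) (l : List ℝ) : ∀ x,
    hkE (fun y => |y| ^ p') l x ≤ (hkE (fun y => |y| ^ p) l x) ^ θ * (hkE (fun y => |y| ^ (2:ℝ)) l x) ^ (1 - θ) := by
  induction l with
  | nil => 
    intro x
    simp only [hkE]
    rw [← rpow_mul (abs_nonneg _), ← rpow_mul (abs_nonneg _), ← rpow_add' (abs_nonneg _), e, mul_comm p, mul_comm 2]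
    have : 0 < θ * p := by positivity
    nlinarith
  | cons a l ih =>
    intro x
    simp only [hkE]
    have nn := hkE_nonneg (fun y => |y| ^ p) (fun y => by positivity) l
    have nn2 := hkE_nonneg (fun y => |y| ^ (2:ℝ)) (fun y => by positivity) l
    have H := hk_two_holder θ _ _ _ _ h0 h1 (nn (x + a)) (nn (x - a)) (nn2 (x + a)) (nn2 (x - a))
    rw [div_rpow (add_nonneg (nn _) (nn _)) (by norm_num), div_rpow (add_nonneg (nn2 _) (nn2 _)) (by norm_num), div_mul_div_comm,
      ← rpow_add (by norm_num), show θ + (1 - θ) = 1 by ring, rpow_one]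
    linarith [ih (x + a), ih (x - a)]

lemma hkE_two (l : List ℝ) : ∀ x, hkE (fun y => |y| ^ (2:ℝ)) l x = x ^ 2 + (l.map (· ^ 2)).sum := by
  induction l with
  | nil => intro x; simp [hkE]
  | cons a l ih => intro x; simp only [hkE, ih, List.map_cons, List.sum_cons]; ring

noncomputable def hkAp (p : ℝ) : ℝ := min (min 1 (2 ^ ((1 : ℝ) / 2 - 1 / p)))
          (2 ^ ((1 : ℝ) / 2) * (Real.Gamma ((p + 1) / 2) / Real.sqrt Real.pi) ^ (1 / p))

lemma hkAp_nonneg (p : ℝ) (hp : 1 ≤ p) : 0 ≤ hkAp p := by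
  have : 0 < Gamma ((p + 1) / 2) := Gamma_pos_of_pos (by linarith)
  unfold hkAp
  positivity

lemma hk_khin (p : ℝ) (hp : 1 ≤ p) (hp2 : p < 2) (l : List ℝ) :
    hkAp p ^ p * ((l.map (· ^ 2)).sum) ^ (p/2) ≤ hkE (fun y => |y| ^ p) l 0 := by
  have hA := hkAp_nonneg p hp
  have nn := hk_sum_nonneg l
  have hE := hkE_nonneg (fun y => |y| ^ p) (fun y => by positivity) l 0
  have hp0 : p ≠ 0 := by linarith
  have hG0 : 0 < Gamma ((p + 1) / 2) := Gamma_pos_of_pos (by linarith)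
  rcases eq_or_lt_of_le nn with hs | hs
  · rw [← hs, zero_rpow (by linarith), mul_zero]; exact hE
  by_cases hcase : 3/2 ≤ p ∧ Gamma ((p+1)/2) ≤ √π / 2
  · refine le_trans ?_ (hk_khin1 p hcase.1 hp2 hcase.2 l)
    gcongr
    refine (rpow_le_rpow hA (min_le_right _ _) (by linarith)).trans (le_of_eq ?_)
    rw [mul_rpow (by positivity) (by positivity), ← rpow_mul (by norm_num), ← rpow_mul (by positivity), one_div_mul_cancel hp0, rpow_one, hkC,
      one_div_mul_eq_div, mul_div_assoc]
  · have hA2 : hkAp p ^ p ≤ 2 ^ (p / 2 - 1) := by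
      refine (rpow_le_rpow hA ((min_le_left _ _).trans (min_le_right _ _)) (by linarith)).trans (le_of_eq ?_)
      rw [← rpow_mul (by norm_num)]
      congr 1; field_simp
    refine (mul_le_mul_of_nonneg_right hA2 (by positivity)).trans ?_
    have ex : ∃ p', p ≤ p' ∧ 3/2 ≤ p' ∧ p' < 2 ∧ Gamma ((p' + 1) / 2) = √π / 2 := by
      rcases le_or_gt (3/2) p with h | h
      · obtain ⟨p', a, b, c⟩ := hk_exists p h hp2 (by
          by_contra hh
          exact hcase ⟨h, (not_le.1 hh).le⟩)
        exact ⟨p', a, h.trans a, b, c⟩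
      · obtain ⟨p', a, b, c⟩ := hk_exists (3/2) le_rfl (by norm_num) (by
          rw [show ((3:ℝ)/2 + 1) / 2 = 5/4 by norm_num]; exact hk_gamma_five_quarter)
        exact ⟨p', h.le.trans a, a, b, c⟩
    obtain ⟨p', q1, q2, q3, q4⟩ := ex
    have K := hk_khin1 p' q2 q3 q4.le l
    have hC : hkC p' = 2 ^ (p' / 2 - 1) := by
      rw [hkC, q4, rpow_sub (by norm_num), rpow_one]
      have : √π ≠ 0 := by positivity
      field_simp
    rw [hC] at K
    rcases eq_or_lt_of_le q1 with rfl | hlt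
    · exact K
    · set θ := (2 - p') / (2 - p) with hθ
      have h2p : 0 < 2 - p := by linarith
      have t0 : 0 < θ := div_pos (by linarith) h2p
      have t1 : θ < 1 := by rw [hθ, div_lt_one h2p]; linarith
      have hθ2 : θ * (2 - p) = 2 - p' := by rw [hθ]; field_simp
      have H := hkE_holder θ p p' t0 t1 (by linarith) (by linarith) l 0
      rw [hkE_two] at H
      set s := (l.map (· ^ 2)).sum with hs'
      rw [zero_pow (by norm_num), zero_add] at H
      have KH := K.trans H
      have e1 : p' / 2 - 1 = (p / 2 - 1) * θ := by linarith
      have e2 : p' / 2 = (p / 2) * θ + (1 - θ) := by linarith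
      rw [e1, e2, rpow_add hs, rpow_mul (by norm_num), rpow_mul hs.le, ← mul_assoc, ← mul_rpow (by positivity) (by positivity)] at KH
      have := le_of_mul_le_mul_right KH (by positivity)
      exact (rpow_le_rpow_iff (by positivity) hE t0).1 this

end part11

section part12
open Real Set MeasureTheory

lemma hkE_ofFn (g : ℝ → ℝ) : ∀ (n : ℕ) (a : Fin n → ℝ) (y : ℝ),
    hkE g (List.ofFn a) y =
      (∑ ε : Fin n → Bool, g (y + ∑ i, (if ε i then (1:ℝ) else -1) * a i)) / 2 ^ n := by
  intro n
  induction n with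
  | zero => intro a y; simp [hkE]
  | succ n ih =>
    intro a y
    rw [List.ofFn_succ, hkE, ih, ih, ← (Fin.consEquiv (fun _ : Fin (n+1) => Bool)).sum_comp,
      Fintype.sum_prod_type, Fintype.sum_bool]
    simp only [Fin.consEquiv, Equiv.coe_fn_mk, Fin.sum_univ_succ, Fin.cons_zero, Fin.cons_succ]
    simp only [if_true, Bool.false_eq_true, if_false, one_mul, neg_one_mul, ← add_assoc, ← sub_eq_add_neg]
    rw [pow_succ]
    field_simp

section fin
variable {X : Type*} [MeasurableSpace X] (μ : Measure X) [IsProbabilityMeasure μ]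

noncomputable def hkF (neg : X → X) (S : Set X) (x : X) : ℝ :=
  Set.indicator S (fun _ => (1 : ℝ)) x - Set.indicator (neg ⁻¹' S) (fun _ => (1 : ℝ)) x

lemma hkF_neg (neg : X → X) (hneg_inv : Function.Involutive neg) (S : Set X) (x : X) :
    hkF neg S (neg x) = - hkF neg S x := by
  have e : neg x ∈ neg ⁻¹' S ↔ x ∈ S := by rw [mem_preimage, hneg_inv x]
  have e2 : neg x ∈ S ↔ x ∈ neg ⁻¹' S := Iff.rfl
  by_cases h1 : x ∈ S <;> by_cases h2 : x ∈ neg ⁻¹' S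
  all_goals
    unfold hkF
    first | rw [indicator_of_mem (e2.2 h2)] | rw [indicator_of_notMem (mt e2.1 h2)]
    first | rw [indicator_of_mem (e.2 h1)] | rw [indicator_of_notMem (mt e.1 h1)]
    simp only [indicator, h1, h2, if_true, if_false]
    norm_num

lemma hkF_meas (neg : X → X) (hn : Measurable neg) (S : Set X) (hS : MeasurableSet S) :
    Measurable (hkF neg S) := 
  (measurable_const.indicator hS).sub (measurable_const.indicator (hn hS))

lemma hkF_abs (neg : X → X) (S : Set X) (x : X) : |hkF neg S x| ≤ 1 := by
  simp only [hkF, indicator]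
  split_ifs <;> norm_num

lemma hkF_sq (neg : X → X) (S : Set X) (hdisj : S ∩ neg ⁻¹' S = ∅) (x : X) :
    hkF neg S x ^ 2 = Set.indicator S (fun _ => (1 : ℝ)) x + Set.indicator (neg ⁻¹' S) (fun _ => (1 : ℝ)) x := by
  have h : ¬ (x ∈ S ∧ x ∈ neg ⁻¹' S) := fun h => by
    have : x ∈ S ∩ neg ⁻¹' S := h
    rw [hdisj] at this; exact this
  by_cases h1 : x ∈ S <;> by_cases h2 : x ∈ neg ⁻¹' S
  · exact absurd ⟨h1, h2⟩ h
  all_goals simp [hkF, h1, h2]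

lemma hkF_sq_int (neg : X → X) (hneg_mp : MeasurePreserving neg μ μ)
    (S : Set X) (hS : MeasurableSet S) (hdisj : S ∩ neg ⁻¹' S = ∅) :
    ∫ x, hkF neg S x ^ 2 ∂μ = 2 * (μ S).toReal := by
  simp only [hkF_sq neg S hdisj]
  have hS2 := hneg_mp.measurable hS
  rw [integral_add ((integrable_const _).indicator hS) ((integrable_const _).indicator hS2),
    integral_indicator_const _ hS, integral_indicator_const _ hS2]
  simp only [Measure.real, hneg_mp.measure_preimage hS.nullMeasurableSet, smul_eq_mul]
  ring

lemma hk_sum_int (neg : X → X) (hneg_mp : MeasurePreserving neg μ μ)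
    (S : Set X) (hS : MeasurableSet S) (hdisj : S ∩ neg ⁻¹' S = ∅) (n : ℕ) (v : Fin n → ℝ) :
    Integrable (fun x : Fin n → X => ∑ i, (hkF neg S (x i) * v i) ^ 2) (Measure.pi fun _ => μ) ∧
    ∫ x : Fin n → X, ∑ i, (hkF neg S (x i) * v i) ^ 2 ∂(Measure.pi fun _ => μ)
      = 2 * (μ S).toReal * ∑ i, v i ^ 2 := by
  have hm := hkF_meas neg hneg_mp.measurable S hS
  have hintg : ∀ i : Fin n, Integrable (fun x : Fin n → X => (hkF neg S (x i) * v i) ^ 2) (Measure.pi fun _ => μ) := by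
    intro i
    refine Integrable.of_bound (C := v i ^ 2) ?_ (Filter.Eventually.of_forall fun x => ?_)
    · exact (((hm.comp (measurable_pi_apply i)).mul_const _).pow_const 2).aestronglyMeasurable
    · rw [norm_eq_abs, abs_of_nonneg (sq_nonneg _), mul_pow, ← sq_abs]
      have := pow_le_one₀ (n := 2) (abs_nonneg _) (hkF_abs neg S (x i))
      nlinarith [sq_nonneg (v i)]
  refine ⟨integrable_finsetSum _ (fun i _ => hintg i), ?_⟩
  rw [integral_finsetSum _ (fun i _ => hintg i), Finset.mul_sum]
  refine Finset.sum_congr rfl fun i _ => ?_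
  simp only [mul_pow]
  rw [integral_mul_const]
  congr 1
  rw [← hkF_sq_int μ neg hneg_mp S hS hdisj]
  have := measurePreserving_eval (fun _ : Fin n => μ) i
  conv_rhs => rw [← this.map_eq]
  rw [integral_map (measurable_pi_apply i).aemeasurable]
  exact (hm.pow_const 2).aestronglyMeasurable

lemma hk_lin_integrable (neg : X → X) (hn : Measurable neg) (S : Set X) (hS : MeasurableSet S)
    (n : ℕ) (c v : Fin n → ℝ) (p : ℝ) (hp : 0 ≤ p) (hc : ∀ i, |c i| ≤ 1) :
    Integrable (fun x : Fin n → X => |∑ i, c i * (hkF neg S (x i) * v i)| ^ p) (Measure.pi fun _ => μ) := by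
  have hm := hkF_meas neg hn S hS
  refine Integrable.of_bound (C := (∑ i, |v i|) ^ p) ?_ (Filter.Eventually.of_forall fun x => ?_)
  · apply Measurable.aestronglyMeasurable
    have : Measurable (fun x : Fin n → X => ∑ i, c i * (hkF neg S (x i) * v i)) :=
      Finset.measurable_sum _ fun i _ => ((hm.comp (measurable_pi_apply i)).mul_const _).const_mul _
    exact (this.abs).pow_const p
  · rw [norm_eq_abs, abs_of_nonneg (by positivity)]
    refine rpow_le_rpow (abs_nonneg _) ((Finset.abs_sum_le_sum_abs _ _).trans ?_) hp
    refine Finset.sum_le_sum fun i _ => ?_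
    rw [abs_mul, abs_mul]
    have h1 := hc i
    have h2 := hkF_abs neg S (x i)
    have h3 : |hkF neg S (x i)| * |v i| ≤ |v i| := mul_le_of_le_one_left (abs_nonneg _) h2
    exact (mul_le_of_le_one_left (by positivity) h1).trans h3

lemma hk_sym (neg : X → X) (hneg_inv : Function.Involutive neg) (hneg_mp : MeasurePreserving neg μ μ)
    (S : Set X) (hS : MeasurableSet S) (n : ℕ) (v : Fin n → ℝ) (p : ℝ) (ε : Fin n → Bool) :
    ∫ x : Fin n → X, |∑ i, (if ε i then (1:ℝ) else -1) * (hkF neg S (x i) * v i)| ^ p ∂(Measure.pi fun _ => μ)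
      = ∫ x : Fin n → X, |∑ i, hkF neg S (x i) * v i| ^ p ∂(Measure.pi fun _ => μ) := by
  have hm := hkF_meas neg hneg_mp.measurable S hS
  have hmp : MeasurePreserving (fun (x : Fin n → X) i => (if ε i then id else neg) (x i))
      (Measure.pi fun _ => μ) (Measure.pi fun _ => μ) := by
    apply measurePreserving_pi (fun _ => μ) (fun _ => μ)
    intro i
    split_ifs
    · exact MeasurePreserving.id μ
    · exact hneg_mp
  conv_rhs => rw [← hmp.map_eq]
  rw [integral_map hmp.measurable.aemeasurable]
  · congr 1; ext x; congr 2
    refine Finset.sum_congr rfl fun i _ => ?_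
    rcases Bool.eq_false_or_eq_true (ε i) with h | h
    · simp only [h, if_true, id, one_mul]
    · simp only [h, Bool.false_eq_true, if_false, hkF_neg neg hneg_inv]; ring
  · apply Measurable.aestronglyMeasurable
    have : Measurable (fun x : Fin n → X => ∑ i, (hkF neg S (x i) * v i)) :=
      Finset.measurable_sum _ fun i _ => ((hm.comp (measurable_pi_apply i)).mul_const _)
    exact (this.abs).pow_const p

lemma hk_int_hkE (neg : X → X) (hneg_inv : Function.Involutive neg) (hneg_mp : MeasurePreserving neg μ μ)
    (S : Set X) (hS : MeasurableSet S) (n : ℕ) (v : Fin n → ℝ) (p : ℝ) (hp : 0 ≤ p) :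
    Integrable (fun x : Fin n → X => hkE (fun y => |y| ^ p) (List.ofFn fun i => hkF neg S (x i) * v i) 0) (Measure.pi fun _ => μ) ∧
    ∫ x : Fin n → X, hkE (fun y => |y| ^ p) (List.ofFn fun i => hkF neg S (x i) * v i) 0 ∂(Measure.pi fun _ => μ)
      = ∫ x : Fin n → X, |∑ i, hkF neg S (x i) * v i| ^ p ∂(Measure.pi fun _ => μ) := by
  simp only [hkE_ofFn, zero_add]
  have hi : ∀ ε : Fin n → Bool, Integrable (fun x : Fin n → X => |∑ i, (if ε i then (1:ℝ) else -1) * (hkF neg S (x i) * v i)| ^ p) (Measure.pi fun _ => μ) := by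
    intro ε
    apply hk_lin_integrable μ neg hneg_mp.measurable S hS n (fun i => if ε i then (1:ℝ) else -1) v p hp
    intro i; split_ifs <;> norm_num
  refine ⟨(integrable_finsetSum _ fun ε _ => hi ε).div_const _, ?_⟩
  rw [integral_div, integral_finsetSum _ (fun ε _ => hi ε)]
  simp only [hk_sym μ neg hneg_inv hneg_mp S hS]
  simp

lemma hk_two_moment (neg : X → X) (hneg_inv : Function.Involutive neg) (hneg_mp : MeasurePreserving neg μ μ)
    (S : Set X) (hS : MeasurableSet S) (hdisj : S ∩ neg ⁻¹' S = ∅) (n : ℕ) (v : Fin n → ℝ) :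
    ∫ x : Fin n → X, |∑ i, hkF neg S (x i) * v i| ^ (2:ℝ) ∂(Measure.pi fun _ => μ) = 2 * (μ S).toReal * ∑ i, v i ^ 2 := by
  rw [← (hk_int_hkE μ neg hneg_inv hneg_mp S hS n v 2 (by norm_num)).2, ← (hk_sum_int μ neg hneg_mp S hS hdisj n v).2]
  congr 1; ext x
  rw [hkE_two, List.map_ofFn, List.sum_ofFn]; simp

lemma hk_part1 (neg : X → X) (hneg_inv : Function.Involutive neg) (hneg_mp : MeasurePreserving neg μ μ)
    (S : Set X) (hS : MeasurableSet S) (hdisj : S ∩ neg ⁻¹' S = ∅) (n : ℕ) (v : Fin n → ℝ) (p : ℝ) (hp : 2 ≤ p) :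
    hkAp p * (2 * (μ S).toReal) ^ ((1 : ℝ) / 2) * (∑ i, v i ^ 2) ^ ((1 : ℝ) / 2) ≤
      (∫ x : Fin n → X, |∑ i, hkF neg S (x i) * v i| ^ p ∂(Measure.pi fun _ => μ)) ^ (1 / p) := by
  have hi : ∀ q : ℝ, 0 ≤ q → Integrable (fun x : Fin n → X => |∑ i, hkF neg S (x i) * v i| ^ q) (Measure.pi fun _ => μ) := by
    intro q hq
    have := hk_lin_integrable μ neg hneg_mp.measurable S hS n (fun _ => 1) v q hq (by simp)
    simpa only [one_mul] using this
  have J := (convexOn_rpow (show 1 ≤ p / 2 by linarith)).map_integral_le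
    (μ := Measure.pi fun _ : Fin n => μ) (f := fun x : Fin n → X => |∑ i, hkF neg S (x i) * v i| ^ (2:ℝ))
    (continuousOn_id.rpow_const (fun x _ => Or.inr (by linarith))) isClosed_Ici
    (Filter.Eventually.of_forall fun x => mem_Ici.2 (by positivity)) (hi 2 (by norm_num)) (by
      have := hi p (by linarith)
      refine this.congr (Filter.Eventually.of_forall fun x => ?_)
      simp only [Function.comp]
      rw [← rpow_mul (abs_nonneg _)]; congr 1; ring)
  rw [hk_two_moment μ neg hneg_inv hneg_mp S hS hdisj] at J
  have e : ∫ x : Fin n → X, (|∑ i, hkF neg S (x i) * v i| ^ (2:ℝ)) ^ (p/2) ∂(Measure.pi fun _ => μ) = ∫ x : Fin n → X, |∑ i, hkF neg S (x i) * v i| ^ p ∂(Measure.pi fun _ => μ) := by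
    congr 1; ext x; rw [← rpow_mul (abs_nonneg _)]; congr 1; ring
  rw [e] at J
  have ht : 0 ≤ 2 * (μ S).toReal := by positivity
  have hv : 0 ≤ ∑ i, v i ^ 2 := Finset.sum_nonneg fun i _ => sq_nonneg _
  have K := rpow_le_rpow (by positivity) J (show 0 ≤ 1 / p by positivity)
  rw [← rpow_mul (by positivity), show p / 2 * (1 / p) = 1 / 2 by field_simp, mul_rpow ht hv] at K
  refine le_trans ?_ K
  rw [mul_assoc]
  exact mul_le_of_le_one_left (by positivity) ((min_le_left _ _).trans (min_le_left _ _))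

lemma hk_part2 (neg : X → X) (hneg_inv : Function.Involutive neg) (hneg_mp : MeasurePreserving neg μ μ)
    (S : Set X) (hS : MeasurableSet S) (hdisj : S ∩ neg ⁻¹' S = ∅) (n : ℕ) (v : Fin n → ℝ) (p : ℝ) (hp : 1 ≤ p) (hp2 : p < 2) :
    hkAp p * (2 * (μ S).toReal) ^ ((1 : ℝ) / p) * (∑ i, v i ^ 2) ^ ((1 : ℝ) / 2) ≤
      (∫ x : Fin n → X, |∑ i, hkF neg S (x i) * v i| ^ p ∂(Measure.pi fun _ => μ)) ^ (1 / p) := by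
  have hA := hkAp_nonneg p hp
  have ht : 0 ≤ 2 * (μ S).toReal := by positivity
  have hv : 0 ≤ ∑ i, v i ^ 2 := Finset.sum_nonneg fun i _ => sq_nonneg _
  have hp0 : p ≠ 0 := by linarith
  rcases eq_or_lt_of_le hv with hv0 | hv0
  · rw [← hv0, zero_rpow (by norm_num), mul_zero]
    exact rpow_nonneg (integral_nonneg fun x => by positivity) _
  obtain ⟨i1, e1⟩ := hk_int_hkE μ neg hneg_inv hneg_mp S hS n v p (by linarith)
  obtain ⟨i2, e2⟩ := hk_sum_int μ neg hneg_mp S hS hdisj n v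
  have key : hkAp p ^ p * (∑ i, v i ^ 2) ^ (p / 2 - 1) * (2 * (μ S).toReal * ∑ i, v i ^ 2) ≤
      ∫ x : Fin n → X, |∑ i, hkF neg S (x i) * v i| ^ p ∂(Measure.pi fun _ => μ) := by
    rw [← e1, ← e2, ← integral_const_mul]
    refine integral_mono (i2.const_mul _) i1 fun x => ?_
    refine le_trans ?_ (hk_khin p hp hp2 _)
    rw [List.map_ofFn, List.sum_ofFn, mul_assoc]
    refine mul_le_mul_of_nonneg_left ?_ (by positivity)
    simp only [Function.comp]
    set s := ∑ i, (hkF neg S (x i) * v i) ^ 2 with hs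
    have hs0 : 0 ≤ s := Finset.sum_nonneg fun i _ => sq_nonneg _
    have hsv : s ≤ ∑ i, v i ^ 2 := by
      refine Finset.sum_le_sum fun i _ => ?_
      rw [mul_pow, ← sq_abs (hkF neg S (x i))]
      exact mul_le_of_le_one_left (sq_nonneg _) (pow_le_one₀ (abs_nonneg _) (hkF_abs neg S (x i)))
    rcases eq_or_lt_of_le hs0 with h0 | h0
    · rw [← h0, mul_zero]; positivity
    · have : (∑ i, v i ^ 2) ^ (p / 2 - 1) ≤ s ^ (p / 2 - 1) := rpow_le_rpow_of_nonpos h0 hsv (by linarith)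
      calc _ ≤ s ^ (p / 2 - 1) * s := by gcongr
        _ = s ^ (p / 2) := by rw [rpow_sub_one h0.ne']; field_simp
  have K := rpow_le_rpow (by positivity) key (show 0 ≤ 1 / p by positivity)
  refine le_trans (le_of_eq ?_) K
  have e : hkAp p ^ p * (∑ i, v i ^ 2) ^ (p / 2 - 1) * (2 * (μ S).toReal * ∑ i, v i ^ 2)
      = hkAp p ^ p * (2 * (μ S).toReal) * (∑ i, v i ^ 2) ^ (p / 2) := by
    rw [rpow_sub_one hv0.ne']; field_simp
  rw [e, mul_rpow (x := hkAp p ^ p * (2 * (μ S).toReal)) (by positivity) (by positivity), mul_rpow (x := hkAp p ^ p) (by positivity) ht, ← rpow_mul hA, ← rpow_mul hv,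
    mul_one_div_cancel hp0, rpow_one, show p / 2 * (1 / p) = 1 / 2 by field_simp]
end fin

end part12

theorem stmt15 {X : Type*} [MeasurableSpace X] (μ : Measure X) [IsProbabilityMeasure μ]
    (neg : X → X) (hneg_inv : Function.Involutive neg) (hneg_mp : MeasurePreserving neg μ μ)
    (S : Set X) (hS : MeasurableSet S) (hdisj : S ∩ neg ⁻¹' S = ∅)
    (n : ℕ) (v : Fin n → ℝ) (p : ℝ) (hp : 1 ≤ p) :
    (2 ≤ p →
      (min (min 1 (2 ^ ((1 : ℝ) / 2 - 1 / p)))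
          (2 ^ ((1 : ℝ) / 2) * (Real.Gamma ((p + 1) / 2) / Real.sqrt Real.pi) ^ (1 / p))) *
          (2 * (μ S).toReal) ^ ((1 : ℝ) / 2) * (∑ i, v i ^ 2) ^ ((1 : ℝ) / 2) ≤
        (∫ x : Fin n → X,
            |∑ i, (Set.indicator S (fun _ => (1 : ℝ)) (x i) -
                Set.indicator (neg ⁻¹' S) (fun _ => (1 : ℝ)) (x i)) * v i| ^ p
            ∂(Measure.pi fun _ => μ)) ^ (1 / p)) ∧
    (p ≤ 2 →
      (min (min 1 (2 ^ ((1 : ℝ) / 2 - 1 / p)))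
          (2 ^ ((1 : ℝ) / 2) * (Real.Gamma ((p + 1) / 2) / Real.sqrt Real.pi) ^ (1 / p))) *
          (2 * (μ S).toReal) ^ ((1 : ℝ) / p) * (∑ i, v i ^ 2) ^ ((1 : ℝ) / 2) ≤
        (∫ x : Fin n → X,
            |∑ i, (Set.indicator S (fun _ => (1 : ℝ)) (x i) -
                Set.indicator (neg ⁻¹' S) (fun _ => (1 : ℝ)) (x i)) * v i| ^ p
            ∂(Measure.pi fun _ => μ)) ^ (1 / p)) := by
  refine ⟨fun h2 => hk_part1 μ neg hneg_inv hneg_mp S hS hdisj n v p h2, fun h2 => ?_⟩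
  rcases eq_or_lt_of_le h2 with rfl | h2
  · exact hk_part1 μ neg hneg_inv hneg_mp S hS hdisj n v 2 le_rfl
  · exact hk_part2 μ neg hneg_inv hneg_mp S hS hdisj n v p hp h2
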